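/- arXiv:2106.00340 — 2 statements merged into one kernel-verified Lean document; each statement's English description precedes it below -/
import Mathlib

section
/- Let D be a squarefree product of n distinct odd primes p_1,...,p_n, and consider the elliptic curve E: y² = x³ - 2Dx with 2-isogenous curve E': y² = x³ + 8Dx. Then the order of the φ-Selmer group S^(φ)(E') equals twice the order of S^(φ)(E); in particular the Tamagawa ratio T_{2D} = #S^(φ)(E)/#S^(φ)(E') = 1/2. -/
/-- Solvability of `W² = d + e·Z⁴` over the `p`-adic field `ℚ_p`. -/
def locSolvAt (p : ℕ) (hp : p.Prime) (d e : ℚ) : Prop :=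
  haveI : Fact p.Prime := ⟨hp⟩
  ∃ W Z : ℚ_[p], W ^ 2 = (d : ℚ_[p]) + (e : ℚ_[p]) * Z ^ 4

/-- The value of the square class represented by a sign `ε`, a power of two bit `t`,
and a set `S` of indices of odd primes: `±2^t·∏_{i ∈ S} pᵢ`. -/
def classVal {n : ℕ} (p : Fin n → ℕ) (x : Bool × Bool × Finset (Fin n)) : ℚ :=
  (if x.1 then -1 else 1) * (if x.2.1 then 2 else 1) * ∏ i ∈ x.2.2, (p i : ℚ)

/-- Membership of the square class `x` in the `φ`-Selmer group attached to the torsors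
`W² = d + (c/d)Z⁴`: local solvability at `∞`, at `2` and at each odd prime `pᵢ`. -/
def inSelmer {n : ℕ} (p : Fin n → ℕ) (hp : ∀ i, (p i).Prime) (c : ℚ)
    (x : Bool × Bool × Finset (Fin n)) : Prop :=
  (∃ W Z : ℝ, W ^ 2 = (classVal p x : ℝ) + ((c / classVal p x : ℚ) : ℝ) * Z ^ 4) ∧
  locSolvAt 2 Nat.prime_two (classVal p x) (c / classVal p x) ∧
  ∀ i : Fin n, locSolvAt (p i) (hp i) (classVal p x) (c / classVal p x)

section LocalSolvability

open Polynomial in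
theorem padic_isSquare_of_norm_lt {p : ℕ} [Fact p.Prime] {a x : ℤ}
    (h : ‖((x ^ 2 - a : ℤ) : ℤ_[p])‖ < ‖((2 * x : ℤ) : ℤ_[p])‖ ^ 2) :
    ∃ w : ℚ_[p], w ^ 2 = (a : ℚ_[p]) := by
  obtain ⟨z, hz, -⟩ := hensels_lemma (p := p) (R := ℤ_[p]) (F := X ^ 2 - C (a : ℤ_[p]))
    (a := (x : ℤ_[p])) (by simpa [one_add_one_eq_two] using h)
  have hz2 : z ^ 2 = (a : ℤ_[p]) := by
    simpa [sub_eq_zero] using hz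
  exact ⟨z, by exact_mod_cast congrArg (fun t : ℤ_[p] => (t : ℚ_[p])) hz2⟩

theorem padic_isSquare_of_jacobiSym {p : ℕ} [Fact p.Prime] (hp : p % 2 = 1) {a : ℤ}
    (h : jacobiSym a p = 1) : ∃ w : ℚ_[p], w ^ 2 = (a : ℚ_[p]) := by
  have hpp : p.Prime := Fact.out
  obtain ⟨y, hy⟩ := ZMod.isSquare_of_jacobiSym_eq_one h
  obtain ⟨x, rfl⟩ := ZMod.intCast_surjective y
  have hpa : ¬ (p : ℤ) ∣ a := by
    intro hdvd
    rw [jacobiSym.mod_left, Int.emod_eq_zero_of_dvd hdvd, jacobiSym.zero_left hpp.one_lt] at h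
    exact zero_ne_one h
  have hxa : (p : ℤ) ∣ x ^ 2 - a := by
    rw [← ZMod.intCast_zmod_eq_zero_iff_dvd]
    push_cast
    rw [hy]
    ring
  have h2x : ¬ (p : ℤ) ∣ 2 * x := by
    intro hdvd
    rcases (Nat.prime_iff_prime_int.1 hpp).dvd_or_dvd hdvd with h2 | hx
    · have := Nat.le_of_dvd two_pos (by exact_mod_cast h2)
      have := hpp.two_le
      omega
    · exact hpa (by simpa using dvd_sub (dvd_pow hx two_ne_zero) hxa)
  apply padic_isSquare_of_norm_lt (x := x)
  have h1 : ‖((2 * x : ℤ) : ℤ_[p])‖ = 1 :=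
    le_antisymm (PadicInt.norm_le_one _)
      (not_lt.1 fun hlt => h2x ((PadicInt.norm_int_lt_one_iff_dvd _).1 hlt))
  rw [h1, one_pow]
  exact (PadicInt.norm_int_lt_one_iff_dvd _).2 hxa

theorem padic_two_isSquare {a : ℤ} (h : a % 8 = 1) : ∃ w : ℚ_[2], w ^ 2 = (a : ℚ_[2]) := by
  apply padic_isSquare_of_norm_lt (x := 1)
  have h8 : ‖((1 ^ 2 - a : ℤ) : ℤ_[2])‖ ≤ ((2 : ℕ) : ℝ) ^ (-(3 : ℕ) : ℤ) :=
    PadicInt.norm_int_le_pow_iff_dvd.2 (by push_cast; omega)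
  have h2 : ‖((2 * 1 : ℤ) : ℤ_[2])‖ = 2⁻¹ := by
    have := PadicInt.norm_p (p := 2)
    simpa using this
  rw [h2]
  refine h8.trans_lt ?_
  norm_num

/-- A point of `W² = d + e Z⁴` over `ℚ_p` can be scaled to an integral one, in one of the two
affine charts, and then reduced modulo any power of `p`. -/
theorem locSolvAt.exists_int {p : ℕ} {hp : p.Prime} {d e : ℤ} (h : locSolvAt p hp d e) (N : ℕ) :
    ∃ w z : ℤ, ((p : ℤ) ^ N ∣ w ^ 2 - (d + e * z ^ 4)) ∨
      ((p : ℤ) ^ N ∣ w ^ 2 - (e + d * (p * z) ^ 4)) := by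
  have : Fact p.Prime := ⟨hp⟩
  have reduce : ∀ (a b : ℤ) (W Z : ℚ_[p]), ‖Z‖ ≤ 1 → W ^ 2 = (a : ℚ_[p]) + b * Z ^ 4 →
      ∃ w z : ℤ, (p : ℤ) ^ N ∣ w ^ 2 - (a + b * z ^ 4) := by
    intro a b W Z hZ hW
    let Z' : ℤ_[p] := ⟨Z, hZ⟩
    have hW1 : ‖W‖ ≤ 1 := by
      have h2 : ‖W ^ 2‖ ≤ 1 := by
        rw [hW, show (a : ℚ_[p]) + b * Z ^ 4 = ((a + b * Z' ^ 4 : ℤ_[p]) : ℚ_[p]) by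
          push_cast; rfl]
        exact PadicInt.norm_le_one _
      rw [norm_pow] at h2
      exact (pow_le_one_iff_of_nonneg (norm_nonneg _) two_ne_zero).1 h2
    let W' : ℤ_[p] := ⟨W, hW1⟩
    have hWZ : W' ^ 2 = a + b * Z' ^ 4 := by
      apply Subtype.coe_injective
      push_cast
      exact hW
    obtain ⟨w, hw⟩ := ZMod.intCast_surjective (PadicInt.toZModPow N W')
    obtain ⟨z, hz⟩ := ZMod.intCast_surjective (PadicInt.toZModPow N Z')
    refine ⟨w, z, ?_⟩
    have := congrArg (PadicInt.toZModPow N) hWZ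
    simp only [map_pow, map_add, map_mul, map_intCast, ← hw, ← hz] at this
    rw [← Nat.cast_pow, ← ZMod.intCast_zmod_eq_zero_iff_dvd]
    push_cast
    rw [this, sub_self]
  obtain ⟨W, Z, hWZ⟩ := h
  push_cast at hWZ
  by_cases hZ : ‖Z‖ ≤ 1
  · obtain ⟨w, z, hw⟩ := reduce d e W Z hZ hWZ
    exact ⟨w, z, Or.inl hw⟩
  · have hZ1 : ‖Z⁻¹‖ < 1 := by
      rw [norm_inv]
      exact inv_lt_one_of_one_lt₀ (not_le.1 hZ)
    have hZ0 : Z ≠ 0 := by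
      rintro rfl
      simp at hZ
    let Y : ℤ_[p] := ⟨Z⁻¹, hZ1.le⟩
    obtain ⟨y, hy⟩ : (p : ℤ_[p]) ∣ Y := (PadicInt.norm_lt_one_iff_dvd Y).1 hZ1
    have hy' : Z⁻¹ = p * (y : ℚ_[p]) := by
      have := congrArg (fun t : ℤ_[p] => (t : ℚ_[p])) hy
      simpa [Y] using this
    obtain ⟨w, z, hw⟩ := reduce e (d * p ^ 4) (W * Z⁻¹ ^ 2) y (PadicInt.norm_le_one _) (by
      have : ((d * p ^ 4 : ℤ) : ℚ_[p]) * (y : ℚ_[p]) ^ 4 = d * Z⁻¹ ^ 4 := by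
        rw [hy']
        push_cast
        ring
      rw [this, mul_pow, hWZ]
      field_simp
      ring)
    exact ⟨w, z, Or.inr (by rwa [mul_pow, ← mul_assoc])⟩

theorem locSolvAt_of_isSquare_left {p : ℕ} [Fact p.Prime] {hp : p.Prime} {d e : ℤ}
    (h : ∃ w : ℚ_[p], w ^ 2 = (d : ℚ_[p])) : locSolvAt p hp d e := by
  obtain ⟨w, hw⟩ := h
  exact ⟨w, 0, by push_cast; rw [hw]; ring⟩

theorem locSolvAt_of_isSquare_add {p : ℕ} [Fact p.Prime] {hp : p.Prime} {d e : ℤ}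
    (h : ∃ w : ℚ_[p], w ^ 2 = ((d + e : ℤ) : ℚ_[p])) : locSolvAt p hp d e := by
  obtain ⟨w, hw⟩ := h
  exact ⟨w, 1, by push_cast at hw ⊢; rw [hw]; ring⟩

theorem locSolvAt_of_isSquare_right {p : ℕ} [Fact p.Prime] {hp : p.Prime} {d e : ℤ}
    (h : ∃ w : ℚ_[p], w ^ 2 = ((e + p ^ 4 * d : ℤ) : ℚ_[p])) : locSolvAt p hp d e := by
  obtain ⟨w, hw⟩ := h
  have hp0 : (p : ℚ_[p]) ≠ 0 := by exact_mod_cast hp.ne_zero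
  refine ⟨w / p ^ 2, 1 / p, ?_⟩
  push_cast at hw ⊢
  rw [div_pow, hw]
  field_simp
  ring

theorem jacobiSym_eq_one_of_dvd_sq_sub {p : ℕ} (hp : p.Prime) {a w : ℤ} (ha : ¬ (p : ℤ) ∣ a)
    (h : (p : ℤ) ∣ w ^ 2 - a) : jacobiSym a p = 1 := by
  have hw : ¬ (p : ℤ) ∣ w := fun hw =>
    ha (by simpa using dvd_sub (dvd_pow hw two_ne_zero) h)
  have hgcd : w.gcd p = 1 := by
    rw [← Int.isCoprime_iff_gcd_eq_one]
    exact ((Nat.prime_iff_prime_int.1 hp).coprime_iff_not_dvd.2 hw).symm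
  rw [← jacobiSym.sq_one' hgcd]
  exact jacobiSym.mod_left' (Int.modEq_iff_dvd.2 h)

/-- No integer square is exactly divisible by `p`. -/
theorem not_sq_dvd_sq_sub {p : ℕ} (hp : p.Prime) {a w : ℤ} (ha : (p : ℤ) ∣ a)
    (ha2 : ¬ (p : ℤ) ^ 2 ∣ a) : ¬ (p : ℤ) ^ 2 ∣ w ^ 2 - a := by
  intro h
  have hw : (p : ℤ) ∣ w ^ 2 := by
    simpa using dvd_add ((dvd_pow_self _ two_ne_zero).trans h) ha
  have hw2 := pow_dvd_pow_of_dvd ((Nat.prime_iff_prime_int.1 hp).dvd_of_dvd_pow hw) 2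
  exact ha2 (by simpa using dvd_sub hw2 h)

theorem locSolvAt_iff_left {p : ℕ} (hp : p.Prime) (hodd : p % 2 = 1) {d e : ℤ}
    (hd : ¬ (p : ℤ) ∣ d) (he : (p : ℤ) ∣ e) (he2 : ¬ (p : ℤ) ^ 2 ∣ e) :
    locSolvAt p hp d e ↔ jacobiSym d p = 1 := by
  have : Fact p.Prime := ⟨hp⟩
  constructor
  · intro h
    obtain ⟨w, z, hw | hw⟩ := h.exists_int 2
    · apply jacobiSym_eq_one_of_dvd_sq_sub hp hd (w := w)
      have h1 := dvd_add ((dvd_pow_self _ two_ne_zero).trans hw) (he.mul_right (z ^ 4))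
      rwa [show w ^ 2 - (d + e * z ^ 4) + e * z ^ 4 = w ^ 2 - d by ring] at h1
    · refine absurd ?_ (not_sq_dvd_sq_sub hp he he2 (w := w))
      have h1 := dvd_add hw (Dvd.intro (p ^ 2 * d * z ^ 4) rfl : (p : ℤ) ^ 2 ∣ _)
      rwa [show w ^ 2 - (e + d * (p * z) ^ 4) + (p : ℤ) ^ 2 * (p ^ 2 * d * z ^ 4) = w ^ 2 - e by
        ring] at h1
  · exact fun h => locSolvAt_of_isSquare_left (padic_isSquare_of_jacobiSym hodd h)

theorem locSolvAt_iff_right {p : ℕ} (hp : p.Prime) (hodd : p % 2 = 1) {d e : ℤ}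
    (hd : (p : ℤ) ∣ d) (hd2 : ¬ (p : ℤ) ^ 2 ∣ d) (he : ¬ (p : ℤ) ∣ e) :
    locSolvAt p hp d e ↔ jacobiSym e p = 1 := by
  have : Fact p.Prime := ⟨hp⟩
  constructor
  · intro h
    obtain ⟨w, z, hw | hw⟩ := h.exists_int 2
    · by_cases hz : (p : ℤ) ∣ z
      · refine absurd ?_ (not_sq_dvd_sq_sub hp hd hd2 (w := w))
        obtain ⟨y, rfl⟩ := hz
        have h1 := dvd_add hw (Dvd.intro (p ^ 2 * e * y ^ 4) rfl : (p : ℤ) ^ 2 ∣ _)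
        rwa [show w ^ 2 - (d + e * (p * y) ^ 4) + (p : ℤ) ^ 2 * (p ^ 2 * e * y ^ 4) = w ^ 2 - d by
          ring] at h1
      · have hez : jacobiSym (e * z ^ 4) p = 1 := by
          apply jacobiSym_eq_one_of_dvd_sq_sub hp (w := w)
          · intro hdvd
            rcases (Nat.prime_iff_prime_int.1 hp).dvd_or_dvd hdvd with h1 | h1
            · exact he h1
            · exact hz ((Nat.prime_iff_prime_int.1 hp).dvd_of_dvd_pow h1)
          · have h1 := dvd_add ((dvd_pow_self _ two_ne_zero).trans hw) hd
            rwa [show w ^ 2 - (d + e * z ^ 4) + d = w ^ 2 - e * z ^ 4 by ring] at h1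
        have hgcd : z.gcd p = 1 := by
          rw [← Int.isCoprime_iff_gcd_eq_one]
          exact ((Nat.prime_iff_prime_int.1 hp).coprime_iff_not_dvd.2 hz).symm
        rwa [jacobiSym.mul_left, show z ^ 4 = (z ^ 2) * (z ^ 2) by ring, jacobiSym.mul_left,
          jacobiSym.sq_one' hgcd, mul_one, mul_one] at hez
    · apply jacobiSym_eq_one_of_dvd_sq_sub hp he (w := w)
      have h1 := dvd_add ((dvd_pow_self _ two_ne_zero).trans hw) (hd.mul_right ((p * z) ^ 4))
      rwa [show w ^ 2 - (e + d * (p * z) ^ 4) + d * (p * z) ^ 4 = w ^ 2 - e by ring] at h1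
  · intro h
    refine locSolvAt_of_isSquare_right (padic_isSquare_of_jacobiSym hodd ?_)
    rw [← h]
    refine jacobiSym.mod_left' ?_
    rw [show (p : ℤ) ^ 4 * d = p * (p ^ 3 * d) by ring, Int.add_mul_emod_self_left]

theorem locSolvAt_two_of_mod_eight {d e : ℤ}
    (h : d % 8 = 1 ∨ (d + e) % 8 = 1 ∨ e % 8 = 1) : locSolvAt 2 Nat.prime_two d e := by
  rcases h with h | h | h
  · exact locSolvAt_of_isSquare_left (padic_two_isSquare h)
  · exact locSolvAt_of_isSquare_add (padic_two_isSquare h)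
  · exact locSolvAt_of_isSquare_right (padic_two_isSquare (by push_cast; omega))

theorem sq_emod_eight (w : ℤ) :
    w % 2 = 1 ∧ w ^ 2 % 8 = 1 ∨ w % 2 = 0 ∧ (w ^ 2 % 16 = 0 ∨ w ^ 2 % 32 = 4) := by
  rcases Int.even_or_odd' w with ⟨k, rfl | rfl⟩
  · right
    refine ⟨by omega, ?_⟩
    rw [mul_pow]
    rcases Int.even_or_odd' k with ⟨l, rfl | rfl⟩
    · left
      ring_nf
      omega
    · right
      obtain ⟨q, hq⟩ := Int.even_mul_succ_self l
      have : (2 : ℤ) ^ 2 * (2 * l + 1) ^ 2 = 16 * (l * (l + 1)) + 4 := by ring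
      omega
  · left
    refine ⟨by omega, ?_⟩
    obtain ⟨q, hq⟩ := Int.even_mul_succ_self k
    have : (2 * k + 1) ^ 2 = 4 * (k * (k + 1)) + 1 := by ring
    omega

theorem locSolvAt_two_iff_odd {d k : ℤ} (hd : d % 2 = 1) (hk : k % 2 = 1) :
    locSolvAt 2 Nat.prime_two d ((8 * k : ℤ) : ℚ) ↔ d % 8 = 1 := by
  refine ⟨fun h => ?_, fun h => locSolvAt_two_of_mod_eight (Or.inl h)⟩
  obtain ⟨w, z, hw | hw⟩ := h.exists_int 5
  · rw [mul_assoc] at hw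
    have := sq_emod_eight w
    push_cast at hw
    omega
  · rw [mul_pow, mul_left_comm] at hw
    have := sq_emod_eight w
    push_cast at hw
    omega

theorem locSolvAt_two_iff_even {m k : ℤ} (hm : m % 2 = 1) (hk : k % 2 = 1) :
    locSolvAt 2 Nat.prime_two ((2 * m : ℤ) : ℚ) ((4 * k : ℤ) : ℚ) ↔ k % 8 = 1 := by
  constructor
  · intro h
    obtain ⟨w, z, hw | hw⟩ := h.exists_int 5
    · rw [mul_assoc] at hw
      have := sq_emod_eight w
      push_cast at hw
      omega
    · rw [mul_pow, mul_left_comm, mul_assoc] at hw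
      have := sq_emod_eight w
      push_cast at hw
      omega
  · intro h
    obtain ⟨w, hw⟩ := padic_two_isSquare (a := k + 8 * m) (by omega)
    refine ⟨w / 2, 1 / 2, ?_⟩
    rw [div_pow, hw]
    push_cast
    ring

end LocalSolvability

section Counting

/-- Orthogonality of characters on the group of subsets of a finite type. -/
theorem sum_prod_eq_ite {ι : Type*} [Fintype ι] (f : ι → ℤ) (hf : ∀ i, f i = 1 ∨ f i = -1)
    [Decidable (∀ i, f i = 1)] :
    ∑ T : Finset ι, ∏ i ∈ T, f i = if ∀ i, f i = 1 then 2 ^ Fintype.card ι else 0 := by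
  rw [← Finset.powerset_univ, ← Finset.prod_one_add]
  split_ifs with h
  · simp [h]
  · push Not at h
    obtain ⟨i, hi⟩ := h
    exact Finset.prod_eq_zero (Finset.mem_univ i) (by rw [(hf i).resolve_left hi]; norm_num)

end Counting

section Reciprocity

theorem jacobiSym_prod_left {ι : Type*} (f : ι → ℕ) (s : Finset ι) (b : ℕ) :
    jacobiSym ((∏ i ∈ s, f i : ℕ) : ℤ) b = ∏ i ∈ s, jacobiSym (f i) b := by
  classical
  induction s using Finset.induction_on with
  | empty => simp
  | insert i s hi ih =>
    rw [Finset.prod_insert hi, Finset.prod_insert hi, Nat.cast_mul, jacobiSym.mul_left, ih]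

theorem jacobiSym_prod_right {ι : Type*} (f : ι → ℕ) (hf : ∀ i, f i ≠ 0) (s : Finset ι) (a : ℤ) :
    jacobiSym a (∏ i ∈ s, f i) = ∏ i ∈ s, jacobiSym a (f i) := by
  classical
  induction s using Finset.induction_on with
  | empty => simp
  | insert i s hi ih =>
    rw [Finset.prod_insert hi, Finset.prod_insert hi,
      jacobiSym.mul_right' _ (hf i) (Finset.prod_ne_zero_iff.2 fun j _ => hf j), ih]

theorem jacobiSym_neg_one_eq_ite {b : ℕ} (hb : b % 2 = 1) :
    jacobiSym (-1) b = if b % 4 = 1 then 1 else -1 := by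
  rw [jacobiSym.at_neg_one (Nat.odd_iff.2 hb), ZMod.χ₄_nat_eq_if_mod_four]
  split_ifs <;> omega

theorem jacobiSym_two_eq_ite {b : ℕ} (hb : b % 2 = 1) :
    jacobiSym 2 b = if b % 8 = 1 ∨ b % 8 = 7 then 1 else -1 := by
  rw [jacobiSym.at_two (Nat.odd_iff.2 hb), ZMod.χ₈_nat_eq_if_mod_eight]
  split_ifs <;> omega

/-- The product formula for the Hilbert symbol of `σ m` and `2 m k`, read at the prime `2`. -/
theorem emod_eight_of_jacobiSym {m k : ℕ} (hm : m % 2 = 1) (hk : k % 2 = 1) (hmk : k.Coprime m)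
    {σ : ℤ} (hσ : σ = 1 ∨ σ = -1)
    (h : jacobiSym (σ * m) k * jacobiSym (-σ * 2 * k) m = 1) :
    σ * m % 8 = 1 ∨ (σ * m + -σ * 2 * k) % 8 = 1 := by
  have hr := jacobiSym.quadratic_reciprocity_if hm hk
  have hkm := jacobiSym.eq_one_or_neg_one (a := k) (b := m) (by simpa using hmk)
  simp only [jacobiSym.mul_left, ← hr, jacobiSym_two_eq_ite hm] at h
  rcases hσ with rfl | rfl <;> rcases hkm with hkm | hkm <;>
    simp only [neg_neg, jacobiSym.one_left, hkm, jacobiSym_neg_one_eq_ite hm,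
      jacobiSym_neg_one_eq_ite hk] at h <;>
    split_ifs at h <;> omega

end Reciprocity

section Global

variable {n : ℕ} {p : Fin n → ℕ}

def primeProd (p : Fin n → ℕ) (s : Finset (Fin n)) : ℕ := ∏ i ∈ s, p i

theorem primeProd_mul_compl (s : Finset (Fin n)) :
    primeProd p s * primeProd p sᶜ = ∏ i, p i :=
  Finset.prod_mul_prod_compl s p

theorem primeProd_eq_mul_erase {s : Finset (Fin n)} {i : Fin n} (hi : i ∈ s) :
    primeProd p s = p i * primeProd p (s.erase i) :=
  (Finset.mul_prod_erase s p hi).symm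

theorem primeProd_compl_singleton {s : Finset (Fin n)} {i : Fin n} (hi : i ∈ s) :
    primeProd p {i}ᶜ = primeProd p (s.erase i) * primeProd p sᶜ := by
  unfold primeProd
  rw [← Finset.prod_union]
  · congr 1
    ext j
    by_cases hj : j = i
    · simp [hj, hi]
    · simp [hj, em]
  · exact Finset.disjoint_left.2 fun j hj hj' =>
      Finset.mem_compl.1 hj' (Finset.mem_of_mem_erase hj)

theorem primeProd_mod_two (hodd : ∀ i, p i % 2 = 1) (s : Finset (Fin n)) :
    primeProd p s % 2 = 1 :=
  Nat.odd_iff.1 (Finset.prod_induction _ Odd (fun _ _ => Odd.mul) odd_one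
    fun i _ => Nat.odd_iff.2 (hodd i))

theorem primeProd_pos (hp : ∀ i, (p i).Prime) (s : Finset (Fin n)) : 0 < primeProd p s :=
  Finset.prod_pos fun i _ => (hp i).pos

theorem prime_dvd_primeProd_iff (hp : ∀ i, (p i).Prime) (hinj : Function.Injective p)
    (s : Finset (Fin n)) (i : Fin n) : p i ∣ primeProd p s ↔ i ∈ s := by
  rw [primeProd, Prime.dvd_finsetProd_iff (hp i).prime]
  constructor
  · rintro ⟨j, hj, hij⟩
    rwa [hinj ((Nat.prime_dvd_prime_iff_eq (hp i) (hp j)).1 hij)]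
  · exact fun hi => ⟨i, hi, dvd_rfl⟩

theorem not_prime_dvd_of_dvd_eight (hp : ∀ i, (p i).Prime) (hodd : ∀ i, p i % 2 = 1) (i : Fin n)
    {u : ℤ} (hu : u ∣ 8) : ¬ (p i : ℤ) ∣ u := by
  intro h
  have h8 : p i ∣ 2 ^ 3 := by exact_mod_cast h.trans hu
  have h2 := (Nat.prime_dvd_prime_iff_eq (hp i) Nat.prime_two).1 ((hp i).dvd_of_dvd_pow h8)
  have := hodd i
  omega

theorem prime_dvd_mul_primeProd_iff (hp : ∀ i, (p i).Prime) (hodd : ∀ i, p i % 2 = 1)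
    (hinj : Function.Injective p) {u : ℤ} (hu : u ∣ 8) (s : Finset (Fin n)) (i : Fin n) :
    (p i : ℤ) ∣ u * primeProd p s ↔ i ∈ s := by
  rw [(Nat.prime_iff_prime_int.1 (hp i)).dvd_mul, Int.natCast_dvd_natCast,
    prime_dvd_primeProd_iff hp hinj]
  simp [not_prime_dvd_of_dvd_eight hp hodd i hu]

theorem not_sq_dvd_mul_primeProd (hp : ∀ i, (p i).Prime) (hodd : ∀ i, p i % 2 = 1)
    (hinj : Function.Injective p) {u : ℤ} (hu : u ∣ 8) (s : Finset (Fin n)) (i : Fin n) :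
    ¬ (p i : ℤ) ^ 2 ∣ u * primeProd p s := by
  intro h
  have hi := (prime_dvd_mul_primeProd_iff hp hodd hinj hu s i).1
    ((dvd_pow_self _ two_ne_zero).trans h)
  rw [primeProd_eq_mul_erase hi, Nat.cast_mul, mul_left_comm, sq] at h
  have h' := Int.dvd_of_mul_dvd_mul_left (by exact_mod_cast (hp i).ne_zero) h
  simpa using (prime_dvd_mul_primeProd_iff hp hodd hinj hu (s.erase i) i).1 h'

theorem jacobiSym_eq_one_or_neg_one_of_not_dvd (hp : ∀ i, (p i).Prime) {i : Fin n} {a : ℤ}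
    (ha : ¬ (p i : ℤ) ∣ a) : jacobiSym a (p i) = 1 ∨ jacobiSym a (p i) = -1 := by
  apply jacobiSym.eq_one_or_neg_one
  rw [← Int.isCoprime_iff_gcd_eq_one]
  exact ((Nat.prime_iff_prime_int.1 (hp i)).coprime_iff_not_dvd.2 ha).symm

theorem jacobiSym_primeProd_eq_one_or_neg_one (hp : ∀ i, (p i).Prime)
    (hinj : Function.Injective p) {i : Fin n} {s : Finset (Fin n)} (hi : i ∉ s) :
    jacobiSym (primeProd p s) (p i) = 1 ∨ jacobiSym (primeProd p s) (p i) = -1 :=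
  jacobiSym_eq_one_or_neg_one_of_not_dvd hp
    (by rwa [Int.natCast_dvd_natCast, prime_dvd_primeProd_iff hp hinj])

theorem locSolvAt_prime_iff (hp : ∀ i, (p i).Prime) (hodd : ∀ i, p i % 2 = 1)
    (hinj : Function.Injective p) {u v : ℤ} (hu : u ∣ 8) (hv : v ∣ 8) (s : Finset (Fin n))
    (i : Fin n) :
    locSolvAt (p i) (hp i) ((u * primeProd p s : ℤ) : ℚ) ((v * primeProd p sᶜ : ℤ) : ℚ) ↔
      jacobiSym (if i ∈ s then v * primeProd p sᶜ else u * primeProd p s) (p i) = 1 := by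
  have hdvd := fun {w : ℤ} (hw : w ∣ 8) t => prime_dvd_mul_primeProd_iff hp hodd hinj hw t i
  split_ifs with hi
  · exact locSolvAt_iff_right (hp i) (hodd i) ((hdvd hu s).2 hi)
      (not_sq_dvd_mul_primeProd hp hodd hinj hu s i) (by simp [hdvd hv, hi])
  · exact locSolvAt_iff_left (hp i) (hodd i) (by simp [hdvd hu, hi]) (by simp [hdvd hv, hi])
      (not_sq_dvd_mul_primeProd hp hodd hinj hv sᶜ i)

/-- The matrix of symbols describing the local conditions for `W² = d - (2D/d) Z⁴` at the odd
primes: the entry `i j` is the contribution of `p j ∣ d` to the condition at `p i`. -/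
def symbolMatrix (p : Fin n → ℕ) (i j : Fin n) : ℤ :=
  if i = j then jacobiSym (-1 * 2 * primeProd p {i}ᶜ) (p i) else jacobiSym (p j) (p i)

/-- The local condition for `W² = d - (2D/d) Z⁴` at `p i`, as a character of the square class. -/
def localSymbol (p : Fin n → ℕ) (x : Bool × Bool × Finset (Fin n)) (i : Fin n) : ℤ :=
  (if x.1 then jacobiSym (-1) (p i) else 1) * (if x.2.1 then jacobiSym 2 (p i) else 1) *
    ∏ j ∈ x.2.2, symbolMatrix p i j

theorem localSymbol_eq_jacobiSym (hp : ∀ i, (p i).Prime) (hodd : ∀ i, p i % 2 = 1)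
    (hinj : Function.Injective p) (a b : Bool) (s : Finset (Fin n)) (i : Fin n) :
    localSymbol p (a, b, s) i =
      jacobiSym (if i ∈ s then (if a then 1 else -1) * (if b then 1 else 2) * primeProd p sᶜ
        else (if a then -1 else 1) * (if b then 2 else 1) * primeProd p s) (p i) := by
  have h1 := jacobiSym_eq_one_or_neg_one_of_not_dvd hp
    (not_prime_dvd_of_dvd_eight hp hodd i (u := -1) (by norm_num))
  have h2 := jacobiSym_eq_one_or_neg_one_of_not_dvd hp
    (not_prime_dvd_of_dvd_eight hp hodd i (u := 2) (by norm_num))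
  by_cases hi : i ∈ s
  · have hM := jacobiSym_primeProd_eq_one_or_neg_one hp hinj (Finset.notMem_erase i s)
    have hprod : ∏ j ∈ s, symbolMatrix p i j = jacobiSym (-1) (p i) * jacobiSym 2 (p i) *
        (jacobiSym (primeProd p (s.erase i)) (p i) * jacobiSym (primeProd p sᶜ) (p i)) *
        jacobiSym (primeProd p (s.erase i)) (p i) := by
      rw [← Finset.mul_prod_erase s _ hi, symbolMatrix, if_pos rfl,
        primeProd_compl_singleton hi, Nat.cast_mul]
      simp only [jacobiSym.mul_left]
      congr 1
      rw [primeProd, jacobiSym_prod_left]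
      exact Finset.prod_congr rfl fun j hj => if_neg (Finset.ne_of_mem_erase hj).symm
    rw [localSymbol, hprod, if_pos hi]
    rcases h1 with h1 | h1 <;> rcases h2 with h2 | h2 <;> rcases hM with hM | hM <;>
      cases a <;> cases b <;>
      simp only [jacobiSym.mul_left, jacobiSym.one_left, h1, h2, hM, Bool.false_eq_true, if_true,
        if_false] <;> ring
  · have hprod : ∏ j ∈ s, symbolMatrix p i j = jacobiSym (primeProd p s) (p i) := by
      rw [primeProd, jacobiSym_prod_left]
      exact Finset.prod_congr rfl fun j hj => if_neg (by rintro rfl; exact hi hj)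
    rw [localSymbol, hprod, if_neg hi]
    cases a <;> cases b <;>
      simp only [jacobiSym.mul_left, jacobiSym.one_left, Bool.false_eq_true, if_true, if_false]

theorem coprime_primeProd_compl (hp : ∀ i, (p i).Prime) (hinj : Function.Injective p)
    (s : Finset (Fin n)) : (primeProd p sᶜ).Coprime (primeProd p s) :=
  Nat.Coprime.prod_left fun i hi => ((hp i).coprime_iff_not_dvd).2 fun h =>
    Finset.mem_compl.1 hi ((prime_dvd_primeProd_iff hp hinj s i).1 h)

theorem jacobiSym_primeProd_right_eq_one (hp : ∀ i, (p i).Prime) {s : Finset (Fin n)} {a : ℤ}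
    (h : ∀ i ∈ s, jacobiSym a (p i) = 1) : jacobiSym a (primeProd p s) = 1 := by
  rw [primeProd, jacobiSym_prod_right p fun i => (hp i).ne_zero]
  exact Finset.prod_eq_one h

theorem exists_real_sq_eq {d e : ℤ} (h : 0 ≤ d ∨ 0 < e) :
    ∃ W Z : ℝ, W ^ 2 = ((d : ℚ) : ℝ) + ((e : ℚ) : ℝ) * Z ^ 4 := by
  suffices ∃ z : ℤ, 0 ≤ d + e * z ^ 4 by
    obtain ⟨z, hz⟩ := this
    refine ⟨√((d + e * z ^ 4 : ℤ) : ℝ), z, ?_⟩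
    rw [Real.sq_sqrt (by exact_mod_cast hz)]
    push_cast
    rfl
  rcases h with h | h
  · exact ⟨0, by simpa using h⟩
  · refine ⟨d, ?_⟩
    have h4 : -d ≤ d ^ 4 := by
      rcases le_or_gt 0 d with hd | hd
      · exact (neg_nonpos.2 hd).trans (by positivity)
      · rw [← Even.neg_pow (by decide)]
        exact le_self_pow₀ (by omega) (by norm_num)
    have : d ^ 4 ≤ e * d ^ 4 := le_mul_of_one_le_left (by positivity) h
    linarith

theorem classVal_eq_intCast (a b : Bool) (s : Finset (Fin n)) :
    classVal p (a, b, s) =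
      (((if a then -1 else 1) * (if b then 2 else 1) * primeProd p s : ℤ) : ℚ) := by
  simp only [classVal, primeProd]
  push_cast
  rfl

theorem div_classVal_eq_intCast (hp : ∀ i, (p i).Prime) (c : ℚ) (v : ℤ) (a b : Bool)
    (s : Finset (Fin n)) (hv : (v : ℚ) * ((if a then -1 else 1) * (if b then 2 else 1)) = c) :
    c * (∏ i, (p i : ℚ)) / classVal p (a, b, s) = ((v * primeProd p sᶜ : ℤ) : ℚ) := by
  have hs : (primeProd p s : ℚ) ≠ 0 := by exact_mod_cast (primeProd_pos hp s).ne'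
  have hD : (∏ i, (p i : ℚ)) = primeProd p s * primeProd p sᶜ := by
    exact_mod_cast (primeProd_mul_compl s).symm
  rw [classVal_eq_intCast, hD, ← hv]
  cases a <;> cases b <;> (push_cast; field_simp)

theorem inSelmer_neg_two_iff (hp : ∀ i, (p i).Prime) (hodd : ∀ i, p i % 2 = 1)
    (hinj : Function.Injective p) (x : Bool × Bool × Finset (Fin n)) :
    inSelmer p hp (-2 * ∏ i, (p i : ℚ)) x ↔ ∀ i, localSymbol p x i = 1 := by
  obtain ⟨a, b, s⟩ := x
  rw [inSelmer, div_classVal_eq_intCast hp (-2) ((if a then 1 else -1) * (if b then 1 else 2)) a b s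
    (by cases a <;> cases b <;> norm_num), classVal_eq_intCast]
  have hloc : ∀ i, locSolvAt (p i) (hp i) _ _ ↔ _ := fun i =>
    (locSolvAt_prime_iff hp hodd hinj (u := (if a then -1 else 1) * (if b then 2 else 1))
      (v := (if a then 1 else -1) * (if b then 1 else 2))
      (by cases a <;> cases b <;> norm_num) (by cases a <;> cases b <;> norm_num) s i).trans
      (by rw [← localSymbol_eq_jacobiSym hp hodd hinj a b s i])
  simp only [hloc]
  refine ⟨fun h => h.2.2, fun h => ⟨exists_real_sq_eq ?_, locSolvAt_two_of_mod_eight ?_, h⟩⟩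
  · have hs := primeProd_pos hp s
    have hs' := primeProd_pos hp sᶜ
    cases a <;> cases b <;> simp <;> omega
  · simp only [localSymbol_eq_jacobiSym hp hodd hinj] at h
    have hd := jacobiSym_primeProd_right_eq_one hp (s := sᶜ) fun i hi => by
      have := h i
      rwa [if_neg (Finset.mem_compl.1 hi)] at this
    have he := jacobiSym_primeProd_right_eq_one hp (s := s) fun i hi => by
      have := h i
      rwa [if_pos hi] at this
    have hm := primeProd_mod_two hodd s
    have hk := primeProd_mod_two hodd sᶜ
    have hcop := coprime_primeProd_compl hp hinj s
    have hde := congrArg₂ (· * ·) hd he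
    have hed := congrArg₂ (· * ·) he hd
    cases a <;> cases b <;> simp only [Bool.false_eq_true, if_true, if_false, mul_one] at hde hed ⊢
    · have := emod_eight_of_jacobiSym hm hk hcop (Or.inl rfl) hde
      omega
    · have := emod_eight_of_jacobiSym hk hm hcop.symm (Or.inr rfl) hed
      omega
    · have := emod_eight_of_jacobiSym hm hk hcop (Or.inr rfl) hde
      omega
    · have := emod_eight_of_jacobiSym hk hm hcop.symm (Or.inl rfl) hed
      omega

/-- The odd positive elements of the Selmer group attached to `W² = d + (8D/d) Z⁴`. -/
def IsOddSelmer (p : Fin n → ℕ) (T : Finset (Fin n)) : Prop :=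
  primeProd p T % 8 = 1 ∧
    ∀ i, jacobiSym (if i ∈ T then 2 * primeProd p Tᶜ else primeProd p T) (p i) = 1

theorem inSelmer_eight_iff (hp : ∀ i, (p i).Prime) (hodd : ∀ i, p i % 2 = 1)
    (hinj : Function.Injective p) (x : Bool × Bool × Finset (Fin n)) :
    inSelmer p hp (8 * ∏ i, (p i : ℚ)) x ↔
      x.1 = false ∧ IsOddSelmer p (if x.2.1 then x.2.2ᶜ else x.2.2) := by
  obtain ⟨a, b, s⟩ := x
  rw [inSelmer, div_classVal_eq_intCast hp 8 ((if a then -1 else 1) * (if b then 4 else 8)) a b s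
    (by cases a <;> cases b <;> norm_num), classVal_eq_intCast]
  have hloc := locSolvAt_prime_iff hp hodd hinj (u := (if a then -1 else 1) * (if b then 2 else 1))
      (v := (if a then -1 else 1) * (if b then 4 else 8))
      (by cases a <;> cases b <;> norm_num) (by cases a <;> cases b <;> norm_num) s
  simp only [hloc]
  have hs := primeProd_pos hp s
  have hs' := primeProd_pos hp sᶜ
  have hm := primeProd_mod_two hodd s
  have hk := primeProd_mod_two hodd sᶜ
  have h4 : ∀ i, jacobiSym 4 (p i) = 1 := fun i => jacobiSym.at_four (Nat.odd_iff.2 (hodd i))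
  cases a
  · have hreal : ∀ (b : Bool) (v : ℤ), ∃ W Z : ℝ,
        W ^ 2 = (((1 * (if b then 2 else 1) * primeProd p s : ℤ) : ℚ) : ℝ) +
          ((v : ℚ) : ℝ) * Z ^ 4 := fun b v =>
      exists_real_sq_eq (Or.inl (by cases b <;> positivity))
    simp only [Bool.false_eq_true, if_false, hreal, true_and]
    cases b
    · simp only [Bool.false_eq_true, if_false, one_mul, IsOddSelmer,
        locSolvAt_two_iff_odd (d := primeProd p s) (k := primeProd p sᶜ) (by omega) (by omega)]
      refine and_congr (by omega) (forall_congr' fun i => ?_)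
      split_ifs
      · rw [show (8 : ℤ) * primeProd p sᶜ = 4 * (2 * primeProd p sᶜ) by ring, jacobiSym.mul_left,
          h4, one_mul]
      · rfl
    · simp only [if_true, one_mul, IsOddSelmer,
        locSolvAt_two_iff_even (m := primeProd p s) (k := primeProd p sᶜ) (by omega) (by omega)]
      refine and_congr (by omega) (forall_congr' fun i => ?_)
      by_cases hi : i ∈ s
      · simp [hi, jacobiSym.mul_left, h4]
      · simp [hi]
  · simp only [if_true, Bool.true_eq_false, false_and, iff_false]
    rintro ⟨⟨W, Z, hWZ⟩, -⟩
    have hd : (((-1 * (if b then 2 else 1) * primeProd p s : ℤ) : ℚ) : ℝ) < 0 := by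
      have : (-1 * (if b then 2 else 1) * primeProd p s : ℤ) < 0 := by cases b <;> simp <;> omega
      exact_mod_cast this
    have he : (((-1 * (if b then 4 else 8) * primeProd p sᶜ : ℤ) : ℚ) : ℝ) ≤ 0 := by
      have : (-1 * (if b then 4 else 8) * primeProd p sᶜ : ℤ) ≤ 0 := by cases b <;> simp
      exact_mod_cast this
    have := mul_nonpos_of_nonpos_of_nonneg he (show 0 ≤ Z ^ 4 by positivity)
    nlinarith [sq_nonneg W]

theorem symbolMatrix_eq_one_or_neg_one (hp : ∀ i, (p i).Prime) (hodd : ∀ i, p i % 2 = 1)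
    (hinj : Function.Injective p) (i j : Fin n) :
    symbolMatrix p i j = 1 ∨ symbolMatrix p i j = -1 := by
  unfold symbolMatrix
  split_ifs with h
  · exact jacobiSym_eq_one_or_neg_one_of_not_dvd hp
      (by rw [prime_dvd_mul_primeProd_iff hp hodd hinj (by norm_num)]; simp)
  · refine jacobiSym_eq_one_or_neg_one_of_not_dvd hp fun hdvd => h ?_
    exact hinj ((Nat.prime_dvd_prime_iff_eq (hp i) (hp j)).1 (by exact_mod_cast hdvd))

theorem prod_eq_one_or_neg_one {ι : Type*} {f : ι → ℤ} (s : Finset ι)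
    (hf : ∀ i, f i = 1 ∨ f i = -1) : ∏ i ∈ s, f i = 1 ∨ ∏ i ∈ s, f i = -1 :=
  Finset.prod_induction f (fun z => z = 1 ∨ z = -1)
    (by rintro _ _ (rfl | rfl) (rfl | rfl) <;> simp) (Or.inl rfl) fun i _ => hf i

/-- Quadratic reciprocity identifies the transpose of the local conditions for
`W² = d - (2D/d) Z⁴` with the local conditions for `W² = d + (8D/d) Z⁴`. -/
theorem isOddSelmer_iff (hp : ∀ i, (p i).Prime) (hodd : ∀ i, p i % 2 = 1)
    (hinj : Function.Injective p) (T : Finset (Fin n)) :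
    IsOddSelmer p T ↔ jacobiSym (-1) (primeProd p T) = 1 ∧ jacobiSym 2 (primeProd p T) = 1 ∧
      ∀ j, ∏ i ∈ T, symbolMatrix p i j = 1 := by
  have hT := primeProd_mod_two hodd T
  have h8 : primeProd p T % 8 = 1 ↔
      jacobiSym (-1) (primeProd p T) = 1 ∧ jacobiSym 2 (primeProd p T) = 1 := by
    rw [jacobiSym_neg_one_eq_ite hT, jacobiSym_two_eq_ite hT]
    split_ifs <;> norm_num <;> omega
  rw [IsOddSelmer, ← and_assoc, ← h8]
  refine and_congr_right fun hT8 => forall_congr' fun j => ?_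
  have hj2 := hodd j
  suffices ∏ i ∈ T, symbolMatrix p i j =
      jacobiSym (if j ∈ T then 2 * primeProd p Tᶜ else primeProd p T) (p j) by rw [this]
  split_ifs with hj
  · have hM := jacobiSym_primeProd_eq_one_or_neg_one hp hinj (Finset.notMem_erase j T)
    have hM2 := primeProd_mod_two hodd (T.erase j)
    have hprod : ∏ i ∈ T.erase j, symbolMatrix p i j =
        jacobiSym (p j) (primeProd p (T.erase j)) := by
      rw [primeProd, jacobiSym_prod_right p fun i => (hp i).ne_zero]
      exact Finset.prod_congr rfl fun i hi => if_neg (Finset.ne_of_mem_erase hi)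
    rw [← Finset.mul_prod_erase T _ hj, hprod, symbolMatrix, if_pos rfl,
      primeProd_compl_singleton hj, ← jacobiSym.quadratic_reciprocity_if hj2 hM2, Nat.cast_mul]
    simp only [jacobiSym.mul_left, jacobiSym_neg_one_eq_ite hj2]
    have hmod : p j % 4 = primeProd p (T.erase j) % 4 := by
      rw [primeProd_eq_mul_erase hj] at hT8
      have h4 : p j * primeProd p (T.erase j) % 4 = 1 := by omega
      rw [Nat.mul_mod] at h4
      rcases (by omega : p j % 4 = 1 ∨ p j % 4 = 3) with h | h <;> rw [h] at h4 ⊢ <;> omega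
    rcases hM with hM | hM <;> rw [hM] <;> split_ifs <;> first | omega | ring
  · rw [jacobiSym.quadratic_reciprocity_one_mod_four (by omega) (Nat.odd_iff.2 hj2)]
    rw [primeProd, jacobiSym_prod_right p fun i => (hp i).ne_zero]
    exact Finset.prod_congr rfl fun i hi => if_neg (by rintro rfl; exact hj hi)

theorem localSymbol_eq_one_or_neg_one (hp : ∀ i, (p i).Prime) (hodd : ∀ i, p i % 2 = 1)
    (hinj : Function.Injective p) (x : Bool × Bool × Finset (Fin n)) (i : Fin n) :
    localSymbol p x i = 1 ∨ localSymbol p x i = -1 := by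
  have h1 := jacobiSym_eq_one_or_neg_one_of_not_dvd hp
    (not_prime_dvd_of_dvd_eight hp hodd i (u := -1) (by norm_num))
  have h2 := jacobiSym_eq_one_or_neg_one_of_not_dvd hp
    (not_prime_dvd_of_dvd_eight hp hodd i (u := 2) (by norm_num))
  have h3 := prod_eq_one_or_neg_one x.2.2 (symbolMatrix_eq_one_or_neg_one hp hodd hinj i)
  unfold localSymbol
  rcases h1 with h1 | h1 <;> rcases h2 with h2 | h2 <;> rcases h3 with h3 | h3 <;>
    rw [h1, h2, h3] <;> split_ifs <;> norm_num

theorem prod_localSymbol (hp : ∀ i, (p i).Prime) (T : Finset (Fin n)) (a b : Bool)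
    (s : Finset (Fin n)) :
    ∏ i ∈ T, localSymbol p (a, b, s) i =
      (if a then jacobiSym (-1) (primeProd p T) else 1) *
        (if b then jacobiSym 2 (primeProd p T) else 1) *
          ∏ j ∈ s, ∏ i ∈ T, symbolMatrix p i j := by
  simp only [localSymbol, Finset.prod_mul_distrib]
  rw [Finset.prod_comm, primeProd, jacobiSym_prod_right p fun i => (hp i).ne_zero,
    jacobiSym_prod_right p fun i => (hp i).ne_zero]
  cases a <;> cases b <;> simp

open Classical in
theorem sum_prod_localSymbol (hp : ∀ i, (p i).Prime) (hodd : ∀ i, p i % 2 = 1)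
    (hinj : Function.Injective p) (T : Finset (Fin n)) :
    ∑ x, ∏ i ∈ T, localSymbol p x i = if IsOddSelmer p T then 4 * 2 ^ n else 0 := by
  have hT := primeProd_mod_two hodd T
  have hsum := sum_prod_eq_ite (fun j => ∏ i ∈ T, symbolMatrix p i j) fun j =>
    prod_eq_one_or_neg_one T fun i => symbolMatrix_eq_one_or_neg_one hp hodd hinj i j
  rw [Fintype.card_fin] at hsum
  have hfiber : ∀ a b : Bool, ∑ s, ∏ i ∈ T, localSymbol p (a, b, s) i =
      (if a then jacobiSym (-1) (primeProd p T) else 1) *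
        (if b then jacobiSym 2 (primeProd p T) else 1) *
          if ∀ j, ∏ i ∈ T, symbolMatrix p i j = 1 then 2 ^ n else 0 := fun a b => by
    rw [← hsum, Finset.mul_sum]
    exact Finset.sum_congr rfl fun s _ => prod_localSymbol hp T a b s
  simp only [Fintype.sum_prod_type, Fintype.sum_bool, hfiber, isOddSelmer_iff hp hodd hinj,
    jacobiSym_neg_one_eq_ite hT, jacobiSym_two_eq_ite hT]
  by_cases h1 : primeProd p T % 4 = 1 <;>
    by_cases h2 : primeProd p T % 8 = 1 ∨ primeProd p T % 8 = 7 <;>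
    by_cases h3 : ∀ j, ∏ i ∈ T, symbolMatrix p i j = 1 <;>
    simp only [h1, h2, h3, if_true, if_false] <;> (norm_num; try ring)

open Classical in
theorem card_filter_localSymbol (hp : ∀ i, (p i).Prime) (hodd : ∀ i, p i % 2 = 1)
    (hinj : Function.Injective p) :
    (Finset.univ.filter fun x => ∀ i, localSymbol p x i = 1).card =
      4 * (Finset.univ.filter (IsOddSelmer p)).card := by
  have h : ∑ x, ∑ T, ∏ i ∈ T, localSymbol p x i = ∑ T, ∑ x, ∏ i ∈ T, localSymbol p x i :=
    Finset.sum_comm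
  simp only [sum_prod_localSymbol hp hodd hinj,
    sum_prod_eq_ite _ (localSymbol_eq_one_or_neg_one hp hodd hinj _), Fintype.card_fin,
    ← Finset.sum_filter, Finset.sum_const, nsmul_eq_mul] at h
  rw [← mul_assoc, mul_left_inj' (by positivity)] at h
  rw [mul_comm]
  exact_mod_cast h

open Classical in
theorem card_inSelmer_eight (hp : ∀ i, (p i).Prime) (hodd : ∀ i, p i % 2 = 1)
    (hinj : Function.Injective p) :
    Nat.card {x // inSelmer p hp (8 * ∏ i, (p i : ℚ)) x} =
      2 * (Finset.univ.filter (IsOddSelmer p)).card := by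
  let e : {x // inSelmer p hp (8 * ∏ i, (p i : ℚ)) x} ≃ Bool × {T // IsOddSelmer p T} :=
    { toFun := fun x => (x.1.2.1, ⟨_, ((inSelmer_eight_iff hp hodd hinj x.1).1 x.2).2⟩)
      invFun := fun y => ⟨(false, y.1, if y.1 then y.2.1ᶜ else y.2.1),
        (inSelmer_eight_iff hp hodd hinj _).2 ⟨rfl, by
          obtain ⟨_ | _, T, hT⟩ := y <;> simpa using hT⟩⟩
      left_inv := by
        rintro ⟨⟨a, b, s⟩, hx⟩
        have ha := ((inSelmer_eight_iff hp hodd hinj _).1 hx).1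
        cases b <;> simp_all
      right_inv := by
        rintro ⟨_ | _, T, hT⟩ <;> simp }
  rw [Nat.card_congr e, Nat.card_prod, Nat.card_eq_fintype_card (α := Bool), Fintype.card_bool,
    Nat.card_eq_fintype_card, Fintype.card_subtype]

theorem isOddSelmer_empty (p : Fin n → ℕ) : IsOddSelmer p ∅ := by
  simp [IsOddSelmer, primeProd]

end Global

/-- For `D` a squarefree product of `n` distinct odd primes, `E : y² = x³ - 2Dx` and
`E' : y² = x³ + 8Dx` its `2`-isogenous curve, the `φ`-Selmer group of `E'` (torsors
`W² = d - (2D/d)Z⁴`) has order twice that of the `φ`-Selmer group of `E` (torsors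
`W² = d + (8D/d)Z⁴`); in particular the Tamagawa ratio `T_{2D} = 1/2`. -/
theorem stmt_16 (n : ℕ) (p : Fin n → ℕ) (hp : ∀ i, (p i).Prime)
    (hodd : ∀ i, p i % 2 = 1) (hinj : Function.Injective p)
    (D : ℚ) (hD : D = ∏ i, (p i : ℚ)) :
    Nat.card {x : Bool × Bool × Finset (Fin n) // inSelmer p hp (-2 * D) x} =
      2 * Nat.card {x : Bool × Bool × Finset (Fin n) // inSelmer p hp (8 * D) x} ∧
    (Nat.card {x : Bool × Bool × Finset (Fin n) // inSelmer p hp (8 * D) x} : ℚ) /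
      (Nat.card {x : Bool × Bool × Finset (Fin n) // inSelmer p hp (-2 * D) x} : ℚ)
      = 1 / 2 := by
  subst hD
  classical
  have h8 := card_inSelmer_eight hp hodd hinj
  have h2 : Nat.card {x : Bool × Bool × Finset (Fin n) // inSelmer p hp (-2 * ∏ i, (p i : ℚ)) x} =
      4 * (Finset.univ.filter (IsOddSelmer p)).card := by
    rw [← card_filter_localSymbol hp hodd hinj, Nat.card_eq_fintype_card, Fintype.card_subtype]
    simp only [inSelmer_neg_two_iff hp hodd hinj]
  have hpos : 0 < (Finset.univ.filter (IsOddSelmer p)).card :=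
    Finset.card_pos.2 ⟨∅, by simpa using isOddSelmer_empty p⟩
  have hne : ((Finset.univ.filter (IsOddSelmer p)).card : ℚ) ≠ 0 := by exact_mod_cast hpos.ne'
  rw [h8, h2]
  refine ⟨by ring, ?_⟩
  push_cast
  field_simp
  norm_num
end

section
/- Let D be a squarefree product of n distinct odd primes, and consider E: y² = x³ + 2Dx with 2-isogenous curve E': y² = x³ - 8Dx. Then #S^(φ)(E) = #S^(φ)(E'), i.e., the Tamagawa ratio T_{-2D} = 1. -/
/-- An approximate square root of sufficient precision forces a `p`-adic integer to be a square. -/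
lemma PadicInt.isSquare_of_norm_sub_lt {p : ℕ} [Fact p.Prime] (u r : ℤ_[p])
    (h : ‖r ^ 2 - u‖ < ‖2 * r‖ ^ 2) : IsSquare u := by
  obtain ⟨z, hz, -⟩ := hensels_lemma (p := p) (R := ℤ_[p])
    (F := Polynomial.X ^ 2 - Polynomial.C u) (a := r)
    (by simpa [one_add_one_eq_two] using h)
  refine ⟨z, ?_⟩
  simp only [map_sub, map_pow, Polynomial.aeval_X, Polynomial.aeval_C] at hz
  simp only [Algebra.algebraMap_self, RingHom.id_apply] at hz
  linear_combination -hz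

/-- `W² = d + eZ⁴` is solvable over `ℚ_p` only if `W² = e + dZ⁴` is. -/
lemma exists_sq_eq_swap {p : ℕ} [Fact p.Prime] {d e : ℚ_[p]} (hd : d ≠ 0)
    (h : ∃ W Z : ℚ_[p], W ^ 2 = d + e * Z ^ 4) : ∃ W Z : ℚ_[p], W ^ 2 = e + d * Z ^ 4 := by
  obtain ⟨W, Z, h⟩ := h
  by_cases hZ : Z = 0
  · have hp0 : (p : ℚ_[p]) ≠ 0 := by exact_mod_cast (Fact.out : p.Prime).ne_zero
    have h2 : 0 < ‖(2 : ℤ_[p])‖ ^ 2 := by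
      have : (2 : ℤ_[p]) ≠ 0 := two_ne_zero
      positivity
    obtain ⟨k, hk⟩ := exists_pow_lt_of_lt_one
      (show 0 < ‖(2 : ℤ_[p])‖ ^ 2 / (‖e / d‖ + 1) by positivity) (Padic.norm_p_lt_one (p := p))
    have hlt : ‖e / d * (p : ℚ_[p]) ^ (4 * k)‖ < ‖(2 : ℤ_[p])‖ ^ 2 := by
      rw [norm_mul, norm_pow]
      have h1 : ‖(p : ℚ_[p])‖ ^ (4 * k) ≤ ‖(p : ℚ_[p])‖ ^ k :=
        pow_le_pow_of_le_one (norm_nonneg _) Padic.norm_p_lt_one.le (by lia)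
      have h3 := (lt_div_iff₀ (by positivity)).1 hk
      have h4 : 0 ≤ ‖(p : ℚ_[p])‖ ^ k := by positivity
      nlinarith [norm_nonneg (e / d)]
    have hle : ‖e / d * (p : ℚ_[p]) ^ (4 * k)‖ ≤ 1 :=
      hlt.le.trans (pow_le_one₀ (norm_nonneg _) (PadicInt.norm_le_one _))
    obtain ⟨a, ha⟩ : ∃ a : ℤ_[p], (a : ℚ_[p]) = e / d * (p : ℚ_[p]) ^ (4 * k) := ⟨⟨_, hle⟩, rfl⟩
    obtain ⟨r, hr⟩ := PadicInt.isSquare_of_norm_sub_lt (1 + a) 1 (by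
      rwa [one_pow, sub_add_cancel_left, norm_neg, mul_one, PadicInt.norm_def, ha])
    have hr' : 1 + e / d * ((p : ℚ_[p]) ^ k) ^ 4 = r * r := by
      rw [← pow_mul', ← ha]
      exact_mod_cast congrArg (fun t : ℤ_[p] ↦ (t : ℚ_[p])) hr
    refine ⟨W * r / (p ^ k) ^ 2, 1 / p ^ k, ?_⟩
    have hW : W ^ 2 = d := by simpa [hZ] using h
    have hq : (p : ℚ_[p]) ^ k ≠ 0 := pow_ne_zero _ hp0
    generalize (p : ℚ_[p]) ^ k = q at hr' hq
    field_simp at hr' ⊢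
    rw [hW]
    linear_combination -hr'
  · exact ⟨W / Z ^ 2, 1 / Z, by field_simp; linear_combination h⟩

/-- If `e` has odd valuation `k ≤ 3`, the points of `W² = d + eZ⁴` over `ℚ_p` are integral. -/
lemma exists_padicInt_sq_eq {p : ℕ} [Fact p.Prime] {d e f : ℤ} {k : ℕ} (hk : Odd k) (hk3 : k ≤ 3)
    (he : e = p ^ k * f) (hf : ¬ (p : ℤ) ∣ f)
    (h : ∃ W Z : ℚ_[p], W ^ 2 = d + e * Z ^ 4) : ∃ W Z : ℤ_[p], W ^ 2 = d + e * Z ^ 4 := by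
  obtain ⟨W, Z, h⟩ := h
  have hp1 : (1 : ℝ) < p := by exact_mod_cast (Fact.out : p.Prime).one_lt
  have hZ : ‖Z‖ ≤ 1 := by
    by_contra! hZ
    have hZ0 : Z ≠ 0 := by rintro rfl; simp at hZ; linarith
    have hfn : ‖(f : ℚ_[p])‖ = 1 := by
      have := (PadicInt.norm_int_lt_one_iff_dvd (p := p) f).not.2 hf
      rw [PadicInt.norm_def, PadicInt.coe_intCast] at this
      exact le_antisymm (Padic.norm_int_le_one f) (not_lt.1 this)
    have hval : Z.valuation < 0 := by
      rw [Padic.norm_eq_zpow_neg_valuation hZ0] at hZ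
      by_contra! hv
      exact absurd hZ (not_lt.2 (zpow_le_one_of_nonpos₀ hp1.le (by lia)))
    have hn : ‖(e : ℚ_[p]) * Z ^ 4‖ = (p : ℝ) ^ (-4 * Z.valuation - k) := by
      rw [he]
      push_cast
      rw [norm_mul, norm_mul, norm_pow, norm_pow, hfn, Padic.norm_eq_zpow_neg_valuation hZ0,
        Padic.norm_p, mul_one, sub_eq_add_neg, zpow_add₀ (by positivity), mul_comm, inv_pow,
        zpow_neg _ (k : ℤ), zpow_natCast, ← zpow_natCast (_ ^ _) 4, ← zpow_mul]
      congr 2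
      push_cast
      ring
    have hgt : 1 < ‖(e : ℚ_[p]) * Z ^ 4‖ := by
      rw [hn]
      exact one_lt_zpow₀ hp1 (by lia)
    have hdn : ‖(d : ℚ_[p])‖ < ‖(e : ℚ_[p]) * Z ^ 4‖ := (Padic.norm_int_le_one d).trans_lt hgt
    have hW : ‖W ^ 2‖ = ‖(e : ℚ_[p]) * Z ^ 4‖ := by
      rw [h, Padic.add_eq_max_of_ne hdn.ne, max_eq_right hdn.le]
    have hW0 : W ≠ 0 := by
      rintro rfl
      rw [← hW] at hgt
      norm_num at hgt
    rw [hn, norm_pow, Padic.norm_eq_zpow_neg_valuation hW0, ← zpow_natCast, ← zpow_mul] at hW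
    have := zpow_right_injective₀ (by positivity) hp1.ne' hW
    obtain ⟨l, hl⟩ := hk
    push_cast at this
    lia
  have hW : ‖W‖ ≤ 1 := by
    have : ‖W ^ 2‖ ≤ 1 := by
      rw [h]
      refine (Padic.nonarchimedean _ _).trans (max_le (Padic.norm_int_le_one d) ?_)
      rw [norm_mul, norm_pow]
      exact mul_le_one₀ (Padic.norm_int_le_one e) (by positivity)
        (pow_le_one₀ (norm_nonneg _) hZ)
    rw [norm_pow] at this
    exact (pow_le_one_iff_of_nonneg (norm_nonneg _) two_ne_zero).1 this
  obtain ⟨w, rfl⟩ : ∃ w : ℤ_[p], (w : ℚ_[p]) = W := ⟨⟨W, hW⟩, rfl⟩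
  obtain ⟨z, rfl⟩ : ∃ z : ℤ_[p], (z : ℚ_[p]) = Z := ⟨⟨Z, hZ⟩, rfl⟩
  exact ⟨w, z, PadicInt.ext (by exact_mod_cast h)⟩

lemma exists_sq_eq_iff_isSquare {p : ℕ} [Fact p.Prime] (hp2 : p ≠ 2) {d e f : ℤ}
    (hd : ¬ (p : ℤ) ∣ d) (he : e = p * f) (hf : ¬ (p : ℤ) ∣ f) :
    (∃ W Z : ℚ_[p], W ^ 2 = d + e * Z ^ 4) ↔ IsSquare (d : ZMod p) := by
  constructor
  · intro h
    obtain ⟨W, Z, h⟩ := exists_padicInt_sq_eq (k := 1) odd_one (by norm_num) (by simpa using he)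
      hf h
    refine ⟨PadicInt.toZMod W, ?_⟩
    have := congrArg (PadicInt.toZMod (p := p)) h
    simp only [map_pow, map_add, map_mul, map_intCast, he] at this
    simp at this
    rw [← this, sq]
  · rintro ⟨r, hr⟩
    obtain ⟨a, rfl⟩ := ZMod.intCast_surjective r
    have hdvd : (p : ℤ) ∣ a ^ 2 - d := by
      rw [← ZMod.intCast_zmod_eq_zero_iff_dvd]
      push_cast
      rw [hr]; ring
    have hpr : Prime (p : ℤ) := Nat.prime_iff_prime_int.1 Fact.out
    have h2a : ¬ (p : ℤ) ∣ 2 * a := by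
      intro h
      rcases hpr.dvd_or_dvd h with h | h
      · have : p ∣ 2 := by exact_mod_cast h
        exact hp2 ((Nat.prime_dvd_prime_iff_eq Fact.out Nat.prime_two).1 this)
      · exact hd (by simpa using dvd_sub (dvd_pow h two_ne_zero) hdvd)
    obtain ⟨w, hw⟩ := PadicInt.isSquare_of_norm_sub_lt (d : ℤ_[p]) (a : ℤ_[p]) (by
      have h1 : ‖((2 * a : ℤ) : ℤ_[p])‖ = 1 :=
        le_antisymm (PadicInt.norm_le_one _)
          (not_lt.1 ((PadicInt.norm_int_lt_one_iff_dvd _).not.2 h2a))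
      have h2 := (PadicInt.norm_int_lt_one_iff_dvd (p := p) _).2 hdvd
      push_cast at h1 h2
      rwa [h1, one_pow])
    refine ⟨w, 0, ?_⟩
    have := congrArg (fun t : ℤ_[p] ↦ (t : ℚ_[p])) hw
    simp at this
    simp [this, sq]

lemma exists_sq_eq_two_of_emod_eight {d e z : ℤ} (h : (d + e * z ^ 4) % 8 = 1) :
    ∃ W Z : ℚ_[2], W ^ 2 = d + e * Z ^ 4 := by
  obtain ⟨w, hw⟩ := PadicInt.isSquare_of_norm_sub_lt ((d + e * z ^ 4 : ℤ) : ℤ_[2]) 1 (by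
    have h1 : ‖((1 - (d + e * z ^ 4) : ℤ) : ℤ_[2])‖ ≤ (2 : ℕ) ^ (-(3 : ℕ) : ℤ) :=
      (PadicInt.norm_int_le_pow_iff_dvd).2 (by push_cast; lia)
    have h2 : ‖(2 : ℤ_[2])‖ = 2⁻¹ := by simpa using PadicInt.norm_p (p := 2)
    push_cast at h1 ⊢
    rw [one_pow, mul_one, h2]
    refine h1.trans_lt (by norm_num))
  refine ⟨w, z, ?_⟩
  have := congrArg (fun t : ℤ_[2] ↦ (t : ℚ_[2])) hw
  simp at this
  rw [this, sq]

lemma emod_four_of_exists_sq_eq_two {d f : ℤ} (hd : d % 2 = 1) (hf : f % 2 = 1)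
    (h : ∃ W Z : ℚ_[2], W ^ 2 = d + ((8 * f : ℤ) : ℚ_[2]) * Z ^ 4) : d % 4 = 1 := by
  obtain ⟨W, Z, h⟩ := exists_padicInt_sq_eq (k := 3) (f := f) (by decide) le_rfl (by norm_num)
    (by push_cast; lia) h
  have := congrArg (PadicInt.toZModPow (p := 2) 2) h
  simp only [map_pow, map_add, map_mul, map_intCast] at this
  generalize PadicInt.toZModPow 2 W = w at this
  change ZMod 4 at w
  have h8 : ((8 * f : ℤ) : ZMod (2 ^ 2)) = 0 := by
    rw [ZMod.intCast_zmod_eq_zero_iff_dvd]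
    push_cast
    lia
  rw [h8, zero_mul, add_zero] at this
  have hw : w ^ 2 = 0 ∨ w ^ 2 = 1 := by clear this; revert w; decide
  rcases hw with hw | hw
  · have : ((d : ℤ) : ZMod 4) = 0 := this.symm.trans hw
    rw [ZMod.intCast_zmod_eq_zero_iff_dvd] at this
    push_cast at this
    lia
  · have : ((d : ℤ) : ZMod 4) = (1 : ℤ) := by push_cast; exact this.symm.trans hw
    rw [ZMod.intCast_eq_intCast_iff] at this
    exact this

open scoped NumberTheorySymbols

/-- The bijection between subsets and indicator vectors over `𝔽₂`. -/
def finsetEquivZModTwo (n : ℕ) : Finset (Fin n) ≃ (Fin n → ZMod 2) where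
  toFun S j := if j ∈ S then 1 else 0
  invFun v := Finset.univ.filter fun j ↦ v j = 1
  left_inv S := by ext j; simp
  right_inv v := by
    ext j
    have : ∀ a : ZMod 2, (if a = 1 then 1 else 0) = a := by decide
    simp [this]

lemma card_finset_sum_eq_zero {n : ℕ} (N : Matrix (Fin n) (Fin n) (ZMod 2)) :
    Nat.card {S : Finset (Fin n) // ∀ i, ∑ j ∈ S, N i j = 0} = 2 ^ (n - N.rank) := by
  have e : {S : Finset (Fin n) // ∀ i, ∑ j ∈ S, N i j = 0} ≃ LinearMap.ker N.mulVecLin :=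
    (finsetEquivZModTwo n).subtypeEquiv fun S ↦ by
      simp [finsetEquivZModTwo, funext_iff, Matrix.mulVec, dotProduct]
  have h := LinearMap.finrank_range_add_finrank_ker N.mulVecLin
  rw [Module.finrank_fin_fun] at h
  rw [Nat.card_congr e, Module.natCard_eq_pow_finrank (K := ZMod 2), Nat.card_zmod, Matrix.rank]
  congr 1
  lia

/-- A predicate on square classes that is invariant under complementation, and whose even part is
cut out by a predicate on subsets with a determined sign, holds for twice as many classes. -/
lemma card_classes_eq_two_mul {n : ℕ} {P : Bool × Bool × Finset (Fin n) → Prop}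
    {Q : Finset (Fin n) → Prop} (g : Finset (Fin n) → Bool) (k : Bool)
    (hP : ∀ ε t S, P (ε, t, S) → P (xor k ε, !t, Sᶜ))
    (hQ : ∀ ε S, P (ε, false, S) ↔ ε = g S ∧ Q S) :
    Nat.card {x // P x} = 2 * Nat.card {S // Q S} := by
  have hP' : ∀ ε t S, P (xor k ε, !t, Sᶜ) ↔ P (ε, t, S) := fun ε t S ↦
    ⟨fun h ↦ by simpa using hP _ _ _ h, hP ε t S⟩
  have e : {x // P x} ≃ Bool × {S // Q S} :=
    { toFun := fun x ↦ (x.1.2.1, if h : x.1.2.1 then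
          ⟨x.1.2.2ᶜ, ((hQ (xor k x.1.1) _).1 (by
            have := hP _ _ _ x.2
            rwa [h] at this)).2⟩
        else ⟨x.1.2.2, ((hQ x.1.1 _).1 (by
            have := x.2
            rw [Bool.not_eq_true] at h
            rwa [← h])).2⟩)
      invFun := fun y ↦ if h : y.1 then
          ⟨(xor k (g y.2.1), true, y.2.1ᶜ), hP _ _ _ ((hQ _ _).2 ⟨rfl, y.2.2⟩)⟩
        else ⟨(g y.2.1, false, y.2.1), (hQ _ _).2 ⟨rfl, y.2.2⟩⟩
      left_inv := by
        rintro ⟨⟨ε, t, S⟩, hx⟩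
        cases t
        · simp [((hQ _ _).1 hx).1]
        · have := ((hQ _ _).1 (hP _ _ _ hx)).1
          simp [← this]
      right_inv := by
        rintro ⟨t, S, hS⟩
        cases t <;> simp }
  rw [Nat.card_congr e, Nat.card_prod, Nat.card_eq_fintype_card, Fintype.card_bool]

/-- The exponent of `-1` in a sign. -/
def signBit (u : ℤ) : ZMod 2 := if u = -1 then 1 else 0

@[simp] lemma signBit_one : signBit 1 = 0 := by decide

@[simp] lemma signBit_neg_one : signBit (-1) = 1 := by decide

lemma signBit_mul {u v : ℤ} (hu : u = 1 ∨ u = -1) (hv : v = 1 ∨ v = -1) :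
    signBit (u * v) = signBit u + signBit v := by
  rcases hu with rfl | rfl <;> rcases hv with rfl | rfl <;> decide

lemma signBit_eq_zero_iff {u : ℤ} (hu : u = 1 ∨ u = -1) : signBit u = 0 ↔ u = 1 := by
  rcases hu with rfl | rfl <;> decide

lemma prod_sign {ι : Type*} (S : Finset ι) (u : ι → ℤ) (hu : ∀ j ∈ S, u j = 1 ∨ u j = -1) :
    (∏ j ∈ S, u j = 1 ∨ ∏ j ∈ S, u j = -1) ∧
      signBit (∏ j ∈ S, u j) = ∑ j ∈ S, signBit (u j) := by
  classical
  induction S using Finset.induction_on with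
  | empty => simp
  | insert a S ha ih =>
    obtain ⟨h1, h2⟩ := ih fun j hj ↦ hu j (Finset.mem_insert_of_mem hj)
    have h3 := hu a (Finset.mem_insert_self _ _)
    rw [Finset.prod_insert ha, Finset.sum_insert ha, signBit_mul h3 h1, h2]
    refine ⟨?_, rfl⟩
    rcases h3 with h3 | h3 <;> rcases h1 with h1 | h1 <;> simp [h3, h1]

lemma chi_four_sign {a : ℤ} (ha : a % 2 = 1) : ZMod.χ₄ a = 1 ∨ ZMod.χ₄ a = -1 := by
  rw [ZMod.χ₄_int_eq_if_mod_four]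
  split_ifs <;> simp_all

lemma chi_eight_sign {a : ℤ} (ha : a % 2 = 1) : ZMod.χ₈ a = 1 ∨ ZMod.χ₈ a = -1 := by
  rw [ZMod.χ₈_int_eq_if_mod_eight]
  split_ifs <;> simp_all

section Residues

variable {n : ℕ} {p : Fin n → ℕ}

/-- The additive quadratic residue symbol of `pⱼ` modulo `pᵢ`. -/
def resBit (p : Fin n → ℕ) (i j : Fin n) : ZMod 2 := signBit J(p j | p i)

/-- The additive residue symbol of `-1` modulo `pⱼ`. -/
def negOneBit (p : Fin n → ℕ) (j : Fin n) : ZMod 2 := signBit (ZMod.χ₄ (p j : ℤ))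

/-- The additive residue symbol of `2` modulo `pⱼ`. -/
def twoBit (p : Fin n → ℕ) (j : Fin n) : ZMod 2 := signBit (ZMod.χ₈ (p j : ℤ))

/-- The Rédei-type matrix whose kernel, and that of whose transpose, are the odd parts of the two
Selmer groups. -/
def redeiMatrix (p : Fin n → ℕ) : Matrix (Fin n) (Fin n) (ZMod 2) := fun i j ↦
  resBit p i j + if i = j then twoBit p i + ∑ k, resBit p i k else 0

lemma two_add_self (a : ZMod 2) : a + a = 0 := CharTwo.add_self_eq_zero a

lemma resBit_self (hp : ∀ i, (p i).Prime) (i : Fin n) : resBit p i i = 0 := by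
  have : J(p i | p i) = 0 := by
    have := Fact.mk (hp i)
    rw [← jacobiSym.legendreSym.to_jacobiSym, legendreSym.eq_zero_iff]
    simp
  rw [resBit, this]
  decide

lemma jacobi_sign (hp : ∀ i, (p i).Prime) (hinj : Function.Injective p) {i j : Fin n}
    (hij : i ≠ j) : J(p j | p i) = 1 ∨ J(p j | p i) = -1 :=
  jacobiSym.eq_one_or_neg_one (by
    rw [Int.gcd_natCast_natCast]
    exact (Nat.coprime_primes (hp j) (hp i)).2 fun h ↦ hij (hinj h).symm)

lemma resBit_swap (hp : ∀ i, (p i).Prime) (hodd : ∀ i, p i % 2 = 1)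
    (hinj : Function.Injective p) (i j : Fin n) :
    resBit p j i = resBit p i j + negOneBit p i * negOneBit p j +
      if i = j then negOneBit p i else 0 := by
  by_cases hij : i = j
  · subst hij
    have : ∀ a : ZMod 2, a * a + a = 0 := by decide
    simp [add_assoc, this]
  · rw [if_neg hij, add_zero, resBit, resBit, negOneBit, negOneBit]
    have hs := jacobi_sign hp hinj hij
    have hi := hodd i
    have hj := hodd j
    have h4 : ∀ k, p k % 4 = 1 ∨ p k % 4 = 3 := fun k ↦ by have := hodd k; lia
    simp only [Int.cast_natCast]
    rcases h4 i with h | h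
    · rw [jacobiSym.quadratic_reciprocity_one_mod_four h (Nat.odd_iff.2 hj),
        ZMod.χ₄_nat_one_mod_four h]
      simp
    · rcases h4 j with h' | h'
      · rw [← jacobiSym.quadratic_reciprocity_one_mod_four h' (Nat.odd_iff.2 hi),
          ZMod.χ₄_nat_one_mod_four h']
        simp
      · rw [jacobiSym.quadratic_reciprocity_three_mod_four h h', ZMod.χ₄_nat_three_mod_four h,
          ZMod.χ₄_nat_three_mod_four h']
        rcases hs with hs | hs <;> rw [hs] <;> decide

lemma sum_redeiMatrix_row (S : Finset (Fin n)) (i : Fin n) :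
    ∑ j ∈ S, redeiMatrix p i j =
      ∑ j ∈ S, resBit p i j + if i ∈ S then twoBit p i + ∑ k, resBit p i k else 0 := by
  simp [redeiMatrix, Finset.sum_add_distrib]

lemma sum_redeiMatrix_col (S : Finset (Fin n)) (i : Fin n) :
    ∑ j ∈ S, redeiMatrix p j i =
      ∑ j ∈ S, resBit p j i + if i ∈ S then twoBit p i + ∑ k, resBit p i k else 0 := by
  simp [redeiMatrix, Finset.sum_add_distrib]

lemma jacobi_prod (hp : ∀ i, (p i).Prime) (hinj : Function.Injective p) {i : Fin n}
    {S : Finset (Fin n)} (hi : i ∉ S) :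
    (J(∏ j ∈ S, (p j : ℤ) | p i) = 1 ∨ J(∏ j ∈ S, (p j : ℤ) | p i) = -1) ∧
      signBit J(∏ j ∈ S, (p j : ℤ) | p i) = ∑ j ∈ S, resBit p i j := by
  have h : J(∏ j ∈ S, (p j : ℤ) | p i) = ∏ j ∈ S, J(p j | p i) := by
    induction S using Finset.induction_on with
    | empty => simp
    | insert a S ha ih =>
      rw [Finset.prod_insert ha, Finset.prod_insert ha, jacobiSym.mul_left,
        ih fun h ↦ hi (Finset.mem_insert_of_mem h)]
  rw [h]
  exact prod_sign S _ fun j hj ↦ jacobi_sign hp hinj (by rintro rfl; exact hi hj)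

lemma jacobi_two (hodd : ∀ i, p i % 2 = 1) (i : Fin n) :
    (J(2 | p i) = 1 ∨ J(2 | p i) = -1) ∧ signBit J(2 | p i) = twoBit p i := by
  have h := jacobiSym.at_two (Nat.odd_iff.2 (hodd i))
  rw [h, twoBit]
  have := chi_eight_sign (a := p i) (by have := hodd i; lia)
  simpa using this

lemma jacobi_neg_one (hodd : ∀ i, p i % 2 = 1) (i : Fin n) :
    (J(-1 | p i) = 1 ∨ J(-1 | p i) = -1) ∧ signBit J(-1 | p i) = negOneBit p i := by
  have h := jacobiSym.at_neg_one (Nat.odd_iff.2 (hodd i))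
  rw [h, negOneBit]
  have := chi_four_sign (a := p i) (by have := hodd i; lia)
  simpa using this

lemma sum_compl_resBit (S : Finset (Fin n)) (i : Fin n) :
    ∑ j ∈ S, resBit p i j + ∑ k, resBit p i k = ∑ j ∈ Sᶜ, resBit p i j := by
  rw [← Finset.sum_add_sum_compl S, ← add_assoc, two_add_self, zero_add]

lemma sum_redeiMatrix_row_eq_zero_iff (hp : ∀ i, (p i).Prime) (hodd : ∀ i, p i % 2 = 1)
    (hinj : Function.Injective p) (S : Finset (Fin n)) (i : Fin n) :
    ∑ j ∈ S, redeiMatrix p i j = 0 ↔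
      J(if i ∈ S then 2 * ∏ j ∈ Sᶜ, (p j : ℤ) else ∏ j ∈ S, (p j : ℤ) | p i) = 1 := by
  rw [sum_redeiMatrix_row]
  split_ifs with hi
  · obtain ⟨h1, h2⟩ := jacobi_prod hp hinj (S := Sᶜ) (i := i) (by simpa using hi)
    obtain ⟨h3, h4⟩ := jacobi_two hodd i
    have h5 : J(2 * ∏ j ∈ Sᶜ, (p j : ℤ) | p i) = 1 ∨ J(2 * ∏ j ∈ Sᶜ, (p j : ℤ) | p i) = -1 := by
      rw [jacobiSym.mul_left]
      rcases h1 with h1 | h1 <;> rcases h3 with h3 | h3 <;> simp [h1, h3]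
    rw [← signBit_eq_zero_iff h5, jacobiSym.mul_left, signBit_mul h3 h1, h2, h4,
      ← sum_compl_resBit, add_left_comm]
  · obtain ⟨h1, h2⟩ := jacobi_prod hp hinj hi
    rw [← signBit_eq_zero_iff h1, h2, add_zero]

lemma sum_redeiMatrix_col_eq_zero_iff (hp : ∀ i, (p i).Prime) (hodd : ∀ i, p i % 2 = 1)
    (hinj : Function.Injective p) (S : Finset (Fin n)) (i : Fin n) {u : ℤ} (hu : u = 1 ∨ u = -1)
    (huS : signBit u = ∑ j ∈ S, negOneBit p j) :
    ∑ j ∈ S, redeiMatrix p j i = 0 ↔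
      J(if i ∈ S then -1 * u * (2 * ∏ j ∈ Sᶜ, (p j : ℤ)) else u * ∏ j ∈ S, (p j : ℤ) | p i) = 1 := by
  obtain ⟨h5, h6⟩ := jacobi_neg_one hodd i
  have hJu : (J(u | p i) = 1 ∨ J(u | p i) = -1) ∧
      signBit J(u | p i) = negOneBit p i * signBit u := by
    rcases hu with rfl | rfl
    · simp
    · simp [h5, h6]
  obtain ⟨h7, h8⟩ := hJu
  have hcol : ∑ j ∈ S, resBit p j i = ∑ j ∈ S, resBit p i j + negOneBit p i * signBit u +
      if i ∈ S then negOneBit p i else 0 := by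
    simp [resBit_swap hp hodd hinj i, Finset.sum_add_distrib, huS, Finset.mul_sum]
  rw [sum_redeiMatrix_col, hcol]
  split_ifs with hi
  · obtain ⟨h1, h2⟩ := jacobi_prod hp hinj (S := Sᶜ) (i := i) (by simpa using hi)
    obtain ⟨h3, h4⟩ := jacobi_two hodd i
    have hs : ∀ {a b : ℤ}, (a = 1 ∨ a = -1) → (b = 1 ∨ b = -1) → (a * b = 1 ∨ a * b = -1) := by
      rintro a b (rfl | rfl) (rfl | rfl) <;> simp
    simp only [jacobiSym.mul_left]
    rw [← signBit_eq_zero_iff (hs (hs h5 h7) (hs h3 h1)), signBit_mul (hs h5 h7) (hs h3 h1),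
      signBit_mul h5 h7, signBit_mul h3 h1, h2, h4, h6, h8, ← sum_compl_resBit]
    apply Eq.congr_left
    ring
  · obtain ⟨h1, h2⟩ := jacobi_prod hp hinj hi
    have h9 : J(u * ∏ j ∈ S, (p j : ℤ) | p i) = 1 ∨ J(u * ∏ j ∈ S, (p j : ℤ) | p i) = -1 := by
      rw [jacobiSym.mul_left]
      rcases h1 with h1 | h1 <;> rcases h7 with h7 | h7 <;> simp [h1, h7]
    rw [← signBit_eq_zero_iff h9, jacobiSym.mul_left, signBit_mul h7 h1, h2, h8]
    apply Eq.congr_left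
    ring

/-- The condition at `2` for the first Selmer group follows from those at the odd primes. -/
lemma sum_twoBit_eq_zero {S : Finset (Fin n)} (h : ∀ i, ∑ j ∈ S, redeiMatrix p j i = 0) :
    ∑ j ∈ S, twoBit p j = 0 := by
  have hsum : ∑ i, ∑ j ∈ S, redeiMatrix p j i = 0 := Finset.sum_eq_zero fun i _ ↦ h i
  simp only [sum_redeiMatrix_col, Finset.sum_add_distrib, Finset.sum_ite_mem,
    Finset.univ_inter] at hsum
  rw [Finset.sum_comm] at hsum
  rwa [add_left_comm, two_add_self, add_zero] at hsum

/-- The condition at `2` for the second Selmer group follows from those at the odd primes. -/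
lemma sum_twoBit_add_eq_zero (hp : ∀ i, (p i).Prime) (hodd : ∀ i, p i % 2 = 1)
    (hinj : Function.Injective p) {S : Finset (Fin n)}
    (h : ∀ i, ∑ j ∈ S, redeiMatrix p i j = 0) :
    ∑ j ∈ S, twoBit p j + (∑ j ∈ S, negOneBit p j) * ∑ j ∈ Sᶜ, negOneBit p j = 0 := by
  have h' : ∑ i, ∑ j ∈ S, redeiMatrix p i j = 0 := Finset.sum_eq_zero fun i _ ↦ h i
  simp only [sum_redeiMatrix_row, Finset.sum_add_distrib, Finset.sum_ite_mem,
    Finset.univ_inter] at h'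
  rw [Finset.sum_comm] at h'
  have hsw : ∀ j, ∑ i, resBit p i j = ∑ i, resBit p j i + negOneBit p j * ∑ i, negOneBit p i +
      negOneBit p j := fun j ↦ by
    simp [resBit_swap hp hodd hinj j, Finset.sum_add_distrib, Finset.mul_sum]
  simp only [hsw, Finset.sum_add_distrib, ← Finset.sum_mul] at h'
  rw [← Finset.sum_add_sum_compl S (negOneBit p)] at h'
  generalize ∑ j ∈ S, negOneBit p j = a at *
  generalize ∑ j ∈ Sᶜ, negOneBit p j = b at *
  generalize ∑ j ∈ S, twoBit p j = c at *
  generalize ∑ j ∈ S, ∑ i, resBit p j i = d at *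
  clear hsw h hinj hodd hp
  revert a b c d
  decide

lemma chi_prod (hodd : ∀ i, p i % 2 = 1) (S : Finset (Fin n)) :
    (∏ j ∈ S, (p j : ℤ)) % 2 = 1 ∧
    signBit (ZMod.χ₄ ((∏ j ∈ S, (p j : ℤ) : ℤ) : ZMod 4)) = ∑ j ∈ S, negOneBit p j ∧
    signBit (ZMod.χ₈ ((∏ j ∈ S, (p j : ℤ) : ℤ) : ZMod 8)) = ∑ j ∈ S, twoBit p j := by
  have hodd' : ∀ i, (p i : ℤ) % 2 = 1 := fun i ↦ by have := hodd i; lia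
  refine ⟨?_, ?_, ?_⟩
  · rw [← Int.odd_iff]
    exact Finset.prod_induction _ Odd (fun _ _ ↦ Odd.mul) odd_one fun j _ ↦ Int.odd_iff.2 (hodd' j)
  · rw [Int.cast_prod, map_prod]
    exact (prod_sign S _ fun j _ ↦ chi_four_sign (hodd' j)).2
  · rw [Int.cast_prod, map_prod]
    exact (prod_sign S _ fun j _ ↦ chi_eight_sign (hodd' j)).2

end Residues

lemma emod_eight_of_signBit {m m' : ℤ} (hm : m % 2 = 1) (hm' : m' % 2 = 1)
    (h : signBit (ZMod.χ₈ m) + signBit (ZMod.χ₄ m) * signBit (ZMod.χ₄ m') = 0) :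
    m % 8 = 1 ∨ (m + 2 * m') % 8 = 1 := by
  rw [ZMod.χ₈_int_eq_if_mod_eight, ZMod.χ₄_int_eq_if_mod_four, ZMod.χ₄_int_eq_if_mod_four] at h
  split_ifs at h <;> simp [signBit] at h <;> lia

section Selmer

variable {n : ℕ} {p : Fin n → ℕ}

lemma inSelmer_iff {hp : ∀ i, (p i).Prime} {c : ℚ} {x : Bool × Bool × Finset (Fin n)} {d e : ℤ}
    (hx : classVal p x = d) (hd : d ≠ 0) (hc : c = d * e) :
    inSelmer p hp c x ↔ (∃ W Z : ℝ, W ^ 2 = d + e * Z ^ 4) ∧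
      (∃ W Z : ℚ_[2], W ^ 2 = d + e * Z ^ 4) ∧
      ∀ i, haveI : Fact (p i).Prime := ⟨hp i⟩
        ∃ W Z : ℚ_[p i], W ^ 2 = d + e * Z ^ 4 := by
  have he : c / d = e := by
    rw [hc]
    field_simp
  simp only [inSelmer, locSolvAt, he, hx, Rat.cast_intCast]

lemma prod_cast_pos (hp : ∀ i, (p i).Prime) (S : Finset (Fin n)) : 0 < ∏ j ∈ S, (p j : ℤ) :=
  Finset.prod_pos fun j _ ↦ by exact_mod_cast (hp j).pos

lemma not_dvd_prod (hp : ∀ i, (p i).Prime) (hinj : Function.Injective p) {i : Fin n}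
    {S : Finset (Fin n)} (hi : i ∉ S) : ¬ (p i : ℤ) ∣ ∏ j ∈ S, (p j : ℤ) := by
  intro h
  obtain ⟨j, hj, hij⟩ := (Nat.prime_iff_prime_int.1 (hp i)).exists_mem_finset_dvd h
  have hij' : p i ∣ p j := by exact_mod_cast hij
  exact hi (hinj ((Nat.prime_dvd_prime_iff_eq (hp i) (hp j)).1 hij') ▸ hj)

/-- Local solvability at `pᵢ` in terms of the residue symbol of the coefficient prime to `pᵢ`. -/
lemma exists_sq_eq_iff_jacobi (hp : ∀ i, (p i).Prime) (hodd : ∀ i, p i % 2 = 1)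
    (hinj : Function.Injective p) (S : Finset (Fin n)) (i : Fin n) {u v : ℤ}
    (hu : ¬ (p i : ℤ) ∣ u) (hv : ¬ (p i : ℤ) ∣ v) :
    (haveI : Fact (p i).Prime := ⟨hp i⟩
      ∃ W Z : ℚ_[p i], W ^ 2 = ((u * ∏ j ∈ S, (p j : ℤ) : ℤ) : ℚ_[p i]) +
        ((v * ∏ j ∈ Sᶜ, (p j : ℤ) : ℤ) : ℚ_[p i]) * Z ^ 4) ↔
      J(if i ∈ S then v * ∏ j ∈ Sᶜ, (p j : ℤ) else u * ∏ j ∈ S, (p j : ℤ) | p i) = 1 := by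
  have : Fact (p i).Prime := ⟨hp i⟩
  have hpi : Prime (p i : ℤ) := Nat.prime_iff_prime_int.1 (hp i)
  have hp2 : p i ≠ 2 := fun h ↦ by have := hodd i; lia
  have key : ∀ (T : Finset (Fin n)) (a b : ℤ), i ∉ T → ¬ (p i : ℤ) ∣ a → ¬ (p i : ℤ) ∣ b →
      ((∃ W Z : ℚ_[p i], W ^ 2 = ((a * ∏ j ∈ T, (p j : ℤ) : ℤ) : ℚ_[p i]) +
        ((b * ∏ j ∈ Tᶜ, (p j : ℤ) : ℤ) : ℚ_[p i]) * Z ^ 4) ↔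
        J(a * ∏ j ∈ T, (p j : ℤ) | p i) = 1) := by
    intro T a b hi ha hb
    have hd : ¬ (p i : ℤ) ∣ a * ∏ j ∈ T, (p j : ℤ) :=
      fun h ↦ (hpi.dvd_or_dvd h).elim ha (not_dvd_prod hp hinj hi)
    have hf : ¬ (p i : ℤ) ∣ b * ∏ j ∈ Tᶜ.erase i, (p j : ℤ) :=
      fun h ↦ (hpi.dvd_or_dvd h).elim hb (not_dvd_prod hp hinj (Finset.notMem_erase _ _))
    rw [← jacobiSym.legendreSym.to_jacobiSym, legendreSym.eq_one_iff _ (by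
      rwa [Ne, ZMod.intCast_zmod_eq_zero_iff_dvd])]
    refine exists_sq_eq_iff_isSquare hp2 hd ?_ hf
    rw [← Finset.mul_prod_erase Tᶜ _ (Finset.mem_compl.2 hi)]
    ring
  split_ifs with hi
  · have h := key Sᶜ v u (by simpa using hi) hv hu
    rw [compl_compl] at h
    rw [← h]
    have h0 : ∀ (T : Finset (Fin n)) (a : ℤ), ¬ (p i : ℤ) ∣ a →
        ((a * ∏ j ∈ T, (p j : ℤ) : ℤ) : ℚ_[p i]) ≠ 0 := fun T a ha ↦ by
      rw [Int.cast_ne_zero]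
      exact mul_ne_zero (by rintro rfl; simp at ha) (prod_cast_pos hp T).ne'
    exact ⟨exists_sq_eq_swap (h0 _ _ hu), exists_sq_eq_swap (h0 _ _ hv)⟩
  · exact key S u v hi hu hv

lemma exists_real_sq_eq_of_neg {d e : ℤ} (h : d * e < 0) :
    ∃ W Z : ℝ, W ^ 2 = d + e * Z ^ 4 := by
  rcases lt_trichotomy d 0 with hd | rfl | hd
  · have he : 0 < e := by nlinarith
    have hd' : (d : ℝ) ≤ 0 := by exact_mod_cast hd.le
    have he' : (0 : ℝ) < e := by exact_mod_cast he
    have hnn : 0 ≤ -(d : ℝ) / e := div_nonneg (by linarith) he'.le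
    refine ⟨0, √√(-(d : ℝ) / e), ?_⟩
    rw [show (√√(-(d : ℝ) / e)) ^ 4 = ((√√(-(d : ℝ) / e)) ^ 2) ^ 2 by ring,
      Real.sq_sqrt (Real.sqrt_nonneg _), Real.sq_sqrt hnn]
    field_simp
    ring
  · simp at h
  · have hd' : (0 : ℝ) ≤ d := by exact_mod_cast hd.le
    exact ⟨√d, 0, by simp [Real.sq_sqrt hd']⟩

lemma exists_real_sq_eq_iff_pos {d e : ℤ} (h : 0 < d * e) :
    (∃ W Z : ℝ, W ^ 2 = d + e * Z ^ 4) ↔ 0 < d := by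
  constructor
  · rintro ⟨W, Z, hW⟩
    by_contra! hd
    have hd1 : d < 0 := lt_of_le_of_ne hd (by rintro rfl; simp at h)
    have he : e < 0 := by nlinarith
    have hd' : (d : ℝ) < 0 := by exact_mod_cast hd1
    have he' : (e : ℝ) < 0 := by exact_mod_cast he
    have : (0 : ℝ) ≤ Z ^ 4 := by positivity
    nlinarith [sq_nonneg W]
  · intro hd
    have hd' : (0 : ℝ) ≤ d := by exact_mod_cast hd.le
    exact ⟨√d, 0, by simp [Real.sq_sqrt hd']⟩

/-- The integer represented by a square class. -/
def classInt (p : Fin n → ℕ) (ε t : Bool) (S : Finset (Fin n)) : ℤ :=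
  (if ε then -1 else 1) * (if t then 2 else 1) * ∏ j ∈ S, (p j : ℤ)

lemma classVal_eq_classInt (ε t : Bool) (S : Finset (Fin n)) :
    classVal p (ε, t, S) = classInt p ε t S := by
  simp only [classVal, classInt]
  push_cast
  rfl

lemma classInt_ne_zero (hp : ∀ i, (p i).Prime) (ε t : Bool) (S : Finset (Fin n)) :
    classInt p ε t S ≠ 0 :=
  mul_ne_zero (mul_ne_zero (by cases ε <;> decide) (by cases t <;> decide)) (prod_cast_pos hp S).ne'

lemma classInt_mul_compl (k ε t : Bool) (S : Finset (Fin n)) :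
    classInt p ε t S * classInt p (xor k ε) (!t) Sᶜ =
      (if k then -1 else 1) * 2 * ∏ j, (p j : ℤ) := by
  rw [← Finset.prod_mul_prod_compl S, classInt, classInt]
  cases k <;> cases ε <;> cases t <;> simp <;> ring

lemma exists_sq_eq_scale {K : Type*} [Field K] [CharZero K] {d e : K}
    (h : ∃ W Z : K, W ^ 2 = 4 * d + e * Z ^ 4) : ∃ W Z : K, W ^ 2 = d + 4 * e * Z ^ 4 := by
  obtain ⟨W, Z, h⟩ := h
  exact ⟨W / 2, Z / 2, by field_simp; linear_combination 4 * h⟩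

lemma inSelmer_neg_eight_compl (hp : ∀ i, (p i).Prime) (ε t : Bool) (S : Finset (Fin n))
    (h : inSelmer p hp (-8 * ∏ i, (p i : ℚ)) (ε, t, S)) :
    inSelmer p hp (-8 * ∏ i, (p i : ℚ)) (xor true ε, !t, Sᶜ) := by
  have hm := classInt_mul_compl (p := p) true ε t S
  have hd := classInt_ne_zero hp ε t S
  have hd' := classInt_ne_zero hp (xor true ε) (!t) Sᶜ
  have hx := classVal_eq_classInt (p := p) ε t S
  have hx' := classVal_eq_classInt (p := p) (xor true ε) (!t) Sᶜ
  generalize classInt p ε t S = d at *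
  generalize classInt p (xor true ε) (!t) Sᶜ = d' at *
  have hq : (d : ℚ) * d' = -2 * ∏ i, (p i : ℚ) := by
    have := congrArg (Int.cast : ℤ → ℚ) hm
    push_cast at this
    simpa using this
  rw [inSelmer_iff hx hd (e := 4 * d') (by push_cast; linear_combination -4 * hq)] at h
  rw [inSelmer_iff hx' hd' (e := 4 * d) (by push_cast; linear_combination -4 * hq)]
  refine ⟨exists_real_sq_eq_of_neg ?_, ?_, fun i ↦ ?_⟩
  · have := prod_cast_pos hp Finset.univ
    simp only [if_true] at hm
    nlinarith
  · have := exists_sq_eq_swap (Int.cast_ne_zero.2 hd) h.2.1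
    push_cast at this ⊢
    exact exists_sq_eq_scale this
  · have : Fact (p i).Prime := ⟨hp i⟩
    have := exists_sq_eq_swap (Int.cast_ne_zero.2 hd) (h.2.2 i)
    push_cast at this ⊢
    exact exists_sq_eq_scale this

lemma inSelmer_two_compl (hp : ∀ i, (p i).Prime) (ε t : Bool) (S : Finset (Fin n))
    (h : inSelmer p hp (2 * ∏ i, (p i : ℚ)) (ε, t, S)) :
    inSelmer p hp (2 * ∏ i, (p i : ℚ)) (xor false ε, !t, Sᶜ) := by
  have hm := classInt_mul_compl (p := p) false ε t S
  have hd := classInt_ne_zero hp ε t S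
  have hd' := classInt_ne_zero hp (xor false ε) (!t) Sᶜ
  have hx := classVal_eq_classInt (p := p) ε t S
  have hx' := classVal_eq_classInt (p := p) (xor false ε) (!t) Sᶜ
  generalize classInt p ε t S = d at *
  generalize classInt p (xor false ε) (!t) Sᶜ = d' at *
  have hq : (d : ℚ) * d' = 2 * ∏ i, (p i : ℚ) := by
    have := congrArg (Int.cast : ℤ → ℚ) hm
    push_cast at this
    simpa using this
  have hpos : 0 < d * d' := by
    have := prod_cast_pos hp Finset.univ
    rw [hm]
    simpa using this
  rw [inSelmer_iff hx hd (e := d') hq.symm, exists_real_sq_eq_iff_pos hpos] at h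
  rw [inSelmer_iff hx' hd' (e := d) (by rw [← hq, mul_comm]),
    exists_real_sq_eq_iff_pos (by rwa [mul_comm])]
  refine ⟨?_, exists_sq_eq_swap (Int.cast_ne_zero.2 hd) h.2.1, fun i ↦ ?_⟩
  · nlinarith [h.1]
  · have : Fact (p i).Prime := ⟨hp i⟩
    exact exists_sq_eq_swap (Int.cast_ne_zero.2 hd) (h.2.2 i)

lemma not_dvd_sign_mul_two_pow (hp : ∀ i, (p i).Prime) (hodd : ∀ i, p i % 2 = 1) (i : Fin n)
    {u : ℤ} (k : ℕ) (hu : u = 1 ∨ u = -1) : ¬ (p i : ℤ) ∣ u * 2 ^ k := by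
  intro h
  have h' : (p i : ℤ) ∣ 2 ^ k := by rcases hu with rfl | rfl <;> simpa using h
  have h2 : p i ∣ 2 := (hp i).dvd_of_dvd_pow (n := k) (by exact_mod_cast h')
  have := (Nat.prime_dvd_prime_iff_eq (hp i) Nat.prime_two).1 h2
  have := hodd i
  lia

lemma inSelmer_two_odd_iff (hp : ∀ i, (p i).Prime) (hodd : ∀ i, p i % 2 = 1)
    (hinj : Function.Injective p) (ε : Bool) (S : Finset (Fin n)) :
    inSelmer p hp (2 * ∏ i, (p i : ℚ)) (ε, false, S) ↔
      ε = false ∧ ∀ i, ∑ j ∈ S, redeiMatrix p i j = 0 := by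
  have hP := prod_cast_pos hp S
  have hP' := prod_cast_pos hp Sᶜ
  have hc : (2 * ∏ i, (p i : ℚ)) = ((classInt p ε false S : ℤ) : ℚ) *
      (((if ε then -1 else 1) * 2 * ∏ j ∈ Sᶜ, (p j : ℤ) : ℤ) : ℚ) := by
    rw [← Finset.prod_mul_prod_compl S, classInt]
    cases ε <;> simp <;> ring
  rw [inSelmer_iff (classVal_eq_classInt _ _ _) (classInt_ne_zero hp _ _ _) hc]
  cases ε
  · have hreal : ∃ W Z : ℝ, W ^ 2 = (classInt p false false S : ℤ) +
        (((if false = true then -1 else 1) * 2 * ∏ j ∈ Sᶜ, (p j : ℤ) : ℤ) : ℝ) * Z ^ 4 := by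
      rw [exists_real_sq_eq_iff_pos] <;> simp [classInt] <;> positivity
    have hloc := fun i ↦ exists_sq_eq_iff_jacobi hp hodd hinj S i (u := 1) (v := 2)
      (by simpa using not_dvd_sign_mul_two_pow hp hodd i 0 (Or.inl rfl))
      (by simpa using not_dvd_sign_mul_two_pow hp hodd i 1 (Or.inl rfl))
    simp only [one_mul] at hloc
    simp only [hreal, true_and]
    simp only [classInt, one_mul, Bool.false_eq_true, if_false, hloc,
      ← sum_redeiMatrix_row_eq_zero_iff hp hodd hinj, and_iff_right_iff_imp]
    intro h
    have h2 := sum_twoBit_add_eq_zero hp hodd hinj h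
    obtain ⟨hm, h4, h8⟩ := chi_prod hodd S
    obtain ⟨hm', h4', -⟩ := chi_prod hodd Sᶜ
    rw [← h4, ← h8, ← h4'] at h2
    rcases emod_eight_of_signBit hm hm' h2 with h | h
    · exact exists_sq_eq_two_of_emod_eight (z := 0) (by simpa using h)
    · exact exists_sq_eq_two_of_emod_eight (z := 1) (by simpa using h)
  · simp only [Bool.true_eq_false, false_and, iff_false]
    rintro ⟨h, -⟩
    rw [exists_real_sq_eq_iff_pos] at h
    · simp [classInt] at h
      lia
    · simp [classInt]
      positivity

lemma inSelmer_neg_eight_odd_iff (hp : ∀ i, (p i).Prime) (hodd : ∀ i, p i % 2 = 1)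
    (hinj : Function.Injective p) (ε : Bool) (S : Finset (Fin n)) :
    inSelmer p hp (-8 * ∏ i, (p i : ℚ)) (ε, false, S) ↔
      ε = decide ((∏ j ∈ S, (p j : ℤ)) % 4 = 3) ∧ ∀ i, ∑ j ∈ S, redeiMatrix p j i = 0 := by
  have hP := prod_cast_pos hp S
  have hP' := prod_cast_pos hp Sᶜ
  obtain ⟨hm, h4, h8⟩ := chi_prod hodd S
  obtain ⟨hm', -, -⟩ := chi_prod hodd Sᶜ
  obtain ⟨u, hu, huε⟩ : ∃ u : ℤ, (u = 1 ∨ u = -1) ∧ u = if ε then -1 else 1 :=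
    ⟨_, by cases ε <;> simp, rfl⟩
  have hd : classInt p ε false S = u * ∏ j ∈ S, (p j : ℤ) := by simp [classInt, huε]
  have hu2 : u * u = 1 := by rcases hu with rfl | rfl <;> rfl
  have hc : (-8 * ∏ i, (p i : ℚ)) = ((u * ∏ j ∈ S, (p j : ℤ) : ℤ) : ℚ) *
      ((-u * 2 ^ 3 * ∏ j ∈ Sᶜ, (p j : ℤ) : ℤ) : ℚ) := by
    have hu2' : (u : ℚ) * u = 1 := by exact_mod_cast hu2
    rw [← Finset.prod_mul_prod_compl S]
    push_cast
    linear_combination 8 * (∏ j ∈ S, (p j : ℚ)) * (∏ j ∈ Sᶜ, (p j : ℚ)) * hu2'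
  have hu' : -u = 1 ∨ -u = -1 := by lia
  have hloc := fun i ↦ exists_sq_eq_iff_jacobi hp hodd hinj S i (u := u) (v := -u * 2 ^ 3)
      (by simpa using not_dvd_sign_mul_two_pow hp hodd i 0 hu)
      (not_dvd_sign_mul_two_pow hp hodd i 3 hu')
  have hsq : ∀ i, J(if i ∈ S then -u * 2 ^ 3 * ∏ j ∈ Sᶜ, (p j : ℤ)
        else u * ∏ j ∈ S, (p j : ℤ) | p i) =
      J(if i ∈ S then -1 * u * (2 * ∏ j ∈ Sᶜ, (p j : ℤ)) else u * ∏ j ∈ S, (p j : ℤ) | p i) := by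
    intro i
    split_ifs
    · rw [show -u * 2 ^ 3 * ∏ j ∈ Sᶜ, (p j : ℤ) =
        2 * 2 * (-1 * u * (2 * ∏ j ∈ Sᶜ, (p j : ℤ))) by ring, jacobiSym.mul_left,
        jacobiSym.mul_left 2 2]
      rcases (jacobi_two hodd i).1 with h | h <;> rw [h] <;> ring
    · rfl
  rw [inSelmer_iff ((classVal_eq_classInt _ _ _).trans (congrArg _ hd))
    (hd ▸ classInt_ne_zero hp _ _ _) hc]
  have hε : (u * ∏ j ∈ S, (p j : ℤ)) % 4 = 1 ↔ ε = decide ((∏ j ∈ S, (p j : ℤ)) % 4 = 3) := by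
    cases ε <;> simp at huε <;> subst huε <;> simp <;> lia
  have hcol : ε = decide ((∏ j ∈ S, (p j : ℤ)) % 4 = 3) →
      ((∀ i, haveI : Fact (p i).Prime := ⟨hp i⟩
        ∃ W Z : ℚ_[p i], W ^ 2 = ((u * ∏ j ∈ S, (p j : ℤ) : ℤ) : ℚ_[p i]) +
        ((-u * 2 ^ 3 * ∏ j ∈ Sᶜ, (p j : ℤ) : ℤ) : ℚ_[p i]) * Z ^ 4) ↔
      ∀ i, ∑ j ∈ S, redeiMatrix p j i = 0) := by
    intro h
    refine forall_congr' fun i ↦ ?_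
    rw [hloc i, hsq, sum_redeiMatrix_col_eq_zero_iff hp hodd hinj S i hu]
    rw [← h4, ZMod.χ₄_int_eq_if_mod_four]
    have := hε.2 h
    congr 1
    split_ifs <;> rcases hu with rfl | rfl <;> lia
  constructor
  · rintro ⟨-, h2, hi⟩
    have h := hε.1 (emod_four_of_exists_sq_eq_two (f := -u * ∏ j ∈ Sᶜ, (p j : ℤ))
      (by rcases hu with rfl | rfl <;> lia) (by rcases hu with rfl | rfl <;> lia)
      (by convert h2 using 8; ring))
    exact ⟨h, (hcol h).1 hi⟩
  · rintro ⟨h, hi⟩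
    refine ⟨exists_real_sq_eq_of_neg ?_, ?_, (hcol h).2 hi⟩
    · have := mul_pos hP hP'
      linear_combination 8 * this - 8 * (∏ j ∈ S, (p j : ℤ)) * (∏ j ∈ Sᶜ, (p j : ℤ)) * hu2
    · refine exists_sq_eq_two_of_emod_eight (z := 0) ?_
      have h2 := sum_twoBit_eq_zero hi
      rw [← h8, signBit_eq_zero_iff (chi_eight_sign hm), ZMod.χ₈_int_eq_if_mod_eight] at h2
      have := hε.2 h
      simp only [ne_eq, OfNat.ofNat_ne_zero, not_false_eq_true, zero_pow, mul_zero, add_zero]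
      split_ifs at h2 <;> rcases hu with rfl | rfl <;> lia

end Selmer

/-- For `D` a squarefree product of `n` distinct odd primes, `E : y² = x³ + 2Dx` and
`E' : y² = x³ - 8Dx` its `2`-isogenous curve, the `φ`-Selmer groups of `E` (torsors
`W² = d - (8D/d)Z⁴`) and of `E'` (torsors `W² = d + (2D/d)Z⁴`) have the same order;
in particular the Tamagawa ratio `T_{-2D} = 1`. -/
theorem stmt_17 (n : ℕ) (p : Fin n → ℕ) (hp : ∀ i, (p i).Prime)
    (hodd : ∀ i, p i % 2 = 1) (hinj : Function.Injective p)
    (D : ℚ) (hD : D = ∏ i, (p i : ℚ)) :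
    Nat.card {x : Bool × Bool × Finset (Fin n) // inSelmer p hp (-8 * D) x} =
      Nat.card {x : Bool × Bool × Finset (Fin n) // inSelmer p hp (2 * D) x} ∧
    (Nat.card {x : Bool × Bool × Finset (Fin n) // inSelmer p hp (-8 * D) x} : ℚ) /
      (Nat.card {x : Bool × Bool × Finset (Fin n) // inSelmer p hp (2 * D) x} : ℚ)
      = 1 := by
  have hcard : Nat.card {x : Bool × Bool × Finset (Fin n) // inSelmer p hp (-8 * D) x} =
      Nat.card {x : Bool × Bool × Finset (Fin n) // inSelmer p hp (2 * D) x} := by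
    subst hD
    rw [card_classes_eq_two_mul _ true (inSelmer_neg_eight_compl hp)
        (inSelmer_neg_eight_odd_iff hp hodd hinj),
      card_classes_eq_two_mul _ false (inSelmer_two_compl hp)
        (inSelmer_two_odd_iff hp hodd hinj),
      card_finset_sum_eq_zero, ← Matrix.rank_transpose (redeiMatrix p)]
    exact congrArg _ (card_finset_sum_eq_zero (redeiMatrix p).transpose)
  refine ⟨hcard, ?_⟩
  rw [hcard, div_self]
  rw [Nat.cast_ne_zero, ← hcard]
  subst hD
  rw [card_classes_eq_two_mul _ false (inSelmer_two_compl hp)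
    (inSelmer_two_odd_iff hp hodd hinj), card_finset_sum_eq_zero] at hcard
  rw [hcard]
  positivity
end
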